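/- arXiv:1512.07382 — 7 statements merged into one kernel-verified Lean document; each statement's English description precedes it below -/
import Mathlib

section
/- For every free ultrafilter 𝒰 on ℕ there exist a free ultrafilter η on ℕ and a real number t ∈ [0,1] such that φ^𝒰(f) = φ_{(η,t)}(f) for every f ∈ ℓ∞. (Every element of 𝒞̃ has the special representation φ_{(η,t)}.) -/
open Filter

lemma aux_diff (f : ℕ → ℝ) (C : ℝ) (hC : ∀ n, |f n| ≤ C) (m n : ℕ) (h : m ≤ n) :
    |∑ i ∈ Finset.Icc 1 n, f i - ∑ i ∈ Finset.Icc 1 m, f i| ≤ C * ((n : ℝ) - m) := by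
  induction n, h using Nat.le_induction with
  | base => simp
  | succ k hk ih =>
    rw [Finset.sum_Icc_succ_top (by omega)]
    have h1 := hC (k + 1)
    rw [abs_le] at *
    push_cast
    constructor <;> nlinarith [h1.1, h1.2, ih.1, ih.2]

lemma aux_diff2 (f : ℕ → ℝ) (C : ℝ) (hC : ∀ n, |f n| ≤ C) (m n : ℕ) :
    |∑ i ∈ Finset.Icc 1 n, f i - ∑ i ∈ Finset.Icc 1 m, f i| ≤ C * |(n : ℝ) - m| := by
  rcases le_total m n with h | h
  · rw [abs_of_nonneg (a := (n : ℝ) - m) (by rw [sub_nonneg]; exact_mod_cast h)]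
    exact aux_diff f C hC m n h
  · rw [abs_sub_comm, abs_sub_comm (n : ℝ),
      abs_of_nonneg (a := (m : ℝ) - n) (by rw [sub_nonneg]; exact_mod_cast h)]
    exact aux_diff f C hC n m h

lemma aux_est (f : ℕ → ℝ) (C : ℝ) (hC : ∀ n, |f n| ≤ C) (n : ℕ) (hn : 0 < n)
    (s p : ℝ) (hs : 1 ≤ s) (hp : 0 < p) :
    |(1 / (s * p)) * ∑ i ∈ Finset.Icc 1 ⌊s * p⌋₊, f i - (1 / (n : ℝ)) * ∑ i ∈ Finset.Icc 1 n, f i|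
      ≤ C * (2 * |n / p - s| + 1 / p) := by
  have hC0 : 0 ≤ C := (abs_nonneg _).trans (hC 0)
  have hn' : (0 : ℝ) < n := by exact_mod_cast hn
  have hsp : 0 < s * p := by positivity
  have h1 := aux_diff2 f C hC n ⌊s * p⌋₊
  have h2 : |∑ i ∈ Finset.Icc 1 n, f i| ≤ C * n := by
    have := aux_diff f C hC 0 n (Nat.zero_le _)
    simpa using this
  have h3 : |((⌊s * p⌋₊ : ℕ) : ℝ) - n| ≤ |n - s * p| + 1 := by
    have a := Nat.floor_le hsp.le
    have b := Nat.lt_floor_add_one (s * p)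
    have c := le_abs_self (n - s * p)
    have d := neg_abs_le (n - s * p)
    rw [abs_le]; constructor <;> linarith
  set S := ∑ i ∈ Finset.Icc 1 n, f i
  set T := ∑ i ∈ Finset.Icc 1 ⌊s * p⌋₊, f i
  have e : (1 / (s * p)) * T - (1 / (n : ℝ)) * S
      = (T - S) / (s * p) + S * (n - s * p) / (n * (s * p)) := by
    field_simp; ring
  have e2 : |(n : ℝ) - s * p| = p * |n / p - s| := by
    rw [← abs_of_pos hp, ← abs_mul, abs_of_pos hp]; congr 1; field_simp
  have hps : p ≤ s * p := by nlinarith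
  have hd : 0 ≤ |(n : ℝ) - s * p| := abs_nonneg _
  rw [e]
  refine (abs_add_le _ _).trans ?_
  rw [abs_div, abs_div, abs_mul S, abs_of_pos hsp, abs_of_pos (mul_pos hn' hsp)]
  calc _ ≤ C * (|n - s * p| + 1) / (s * p) + (C * n) * |n - s * p| / (n * (s * p)) := by
        gcongr
        exact h1.trans (by gcongr)
    _ = C * (2 * |n - s * p| + 1) / (s * p) := by field_simp; ring
    _ ≤ C * (2 * |n - s * p| + 1) / p := by gcongr
    _ = _ := by rw [e2]; field_simp

/-- Every element `φ^𝒰` of `𝒞̃` (the functional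
`f ↦ 𝒰-lim_n (1/n) ∑_{i=1}^n f(i)` for a free ultrafilter `𝒰` on `ℕ`) can be
written in the special form `φ_{(η,t)}` for some free ultrafilter `η` on `ℕ`
and some `t ∈ [0,1]`, where
`φ_{(η,t)}(f) = η-lim_n (1/(2^t·2^n)) ∑_{i=1}^{⌊2^t·2^n⌋} f(i)`. -/
theorem stmt0 (𝒰 : Ultrafilter ℕ) (h𝒰 : (𝒰 : Filter ℕ) ≤ Filter.cofinite) :
    ∃ (η : Ultrafilter ℕ) (t : ℝ), (η : Filter ℕ) ≤ Filter.cofinite ∧ t ∈ Set.Icc (0:ℝ) 1 ∧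
      ∀ f : ℕ → ℝ, (∃ C : ℝ, ∀ n, |f n| ≤ C) →
        limUnder (𝒰 : Filter ℕ)
            (fun n : ℕ => (1 / (n : ℝ)) * ∑ i ∈ Finset.Icc 1 n, f i) =
          limUnder (η : Filter ℕ)
            (fun n : ℕ => (1 / ((2:ℝ) ^ t * 2 ^ n)) *
              ∑ i ∈ Finset.Icc 1 ⌊(2:ℝ) ^ t * 2 ^ n⌋₊, f i) := by
  have hU : (𝒰 : Filter ℕ) ≤ atTop := by rwa [← Nat.cofinite_eq_atTop]
  have hlog : Tendsto (Nat.log 2) atTop atTop := by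
    refine tendsto_atTop.2 fun b => ?_
    filter_upwards [eventually_ge_atTop (2 ^ b)] with n hn
    exact Nat.le_log_of_pow_le (by norm_num) hn
  have key : ∀ (g : ℕ → ℝ) (a b : ℝ), (∀ᶠ n in (𝒰 : Filter ℕ), g n ∈ Set.Icc a b) →
      ∃ x ∈ Set.Icc a b, Tendsto g 𝒰 (nhds x) := by
    intro g a b h
    exact (isCompact_Icc (a := a) (b := b)).ultrafilter_le_nhds (𝒰.map g)
      (by rw [le_principal_iff]; exact h)
  obtain ⟨s, hs, hr⟩ := key (fun n => (n : ℝ) / 2 ^ (Nat.log 2 n)) 1 2 (by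
    filter_upwards [hU (eventually_gt_atTop 0)] with n hn
    have h1 := Nat.pow_log_le_self 2 (x := n) (by omega)
    have h2 := Nat.lt_pow_succ_log_self (b := 2) (by norm_num) n
    have h1' : (2 : ℝ) ^ (Nat.log 2 n) ≤ n := by exact_mod_cast h1
    have h2' : (n : ℝ) < 2 ^ (Nat.log 2 n + 1) := by exact_mod_cast h2
    constructor
    · rw [le_div_iff₀ (by positivity)]; linarith
    · rw [div_le_iff₀ (by positivity)]; rw [pow_succ] at h2'; linarith)
  have hs0 : 0 < s := by linarith [hs.1]
  have h2t : (2 : ℝ) ^ (Real.logb 2 s) = s :=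
    Real.rpow_logb (by norm_num) (by norm_num) hs0
  refine ⟨𝒰.map (Nat.log 2), Real.logb 2 s, ?_, ⟨?_, ?_⟩, ?_⟩
  · rw [Nat.cofinite_eq_atTop]
    exact hlog.mono_left hU
  · exact Real.logb_nonneg (by norm_num) hs.1
  · rw [Real.logb_le_iff_le_rpow (by norm_num) hs0]; simpa using hs.2
  · rintro f ⟨C, hC⟩
    rw [h2t]
    obtain ⟨x, -, hx⟩ := key (fun n : ℕ => (1 / (n : ℝ)) * ∑ i ∈ Finset.Icc 1 n, f i) (-C) C (by
      filter_upwards [hU (eventually_gt_atTop 0)] with n hn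
      have hn' : (0 : ℝ) < n := by exact_mod_cast hn
      have := aux_diff f C hC 0 n (Nat.zero_le _)
      simp only [Finset.Icc_eq_empty_of_lt Nat.zero_lt_one, Finset.sum_empty, sub_zero,
        Nat.cast_zero] at this
      rw [Set.mem_Icc, ← abs_le, abs_mul, abs_of_pos (by positivity), one_div,
        inv_mul_le_iff₀ hn']
      linarith)
    rw [hx.limUnder_eq]
    symm
    apply Tendsto.limUnder_eq
    rw [Ultrafilter.coe_map, tendsto_map'_iff]
    have hp : Tendsto (fun n : ℕ => 1 / (2 : ℝ) ^ (Nat.log 2 n)) 𝒰 (nhds 0) := by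
      have := (tendsto_pow_atTop_nhds_zero_of_lt_one (r := (1 / 2 : ℝ)) (by norm_num)
        (by norm_num)).comp (hlog.mono_left hU)
      refine this.congr fun n => ?_
      simp
    have hb : Tendsto (fun n : ℕ => C * (2 * |(n : ℝ) / 2 ^ (Nat.log 2 n) - s|
        + 1 / (2 : ℝ) ^ (Nat.log 2 n))) 𝒰 (nhds 0) := by
      have := (((hr.sub_const s).abs.const_mul 2).add hp).const_mul C
      simpa using this
    have hd := squeeze_zero_norm' (f := fun n : ℕ =>
      (1 / (s * 2 ^ (Nat.log 2 n))) * ∑ i ∈ Finset.Icc 1 ⌊s * 2 ^ (Nat.log 2 n)⌋₊, f i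
        - (1 / (n : ℝ)) * ∑ i ∈ Finset.Icc 1 n, f i) (by
      filter_upwards [hU (eventually_gt_atTop 0)] with n hn
      rw [Real.norm_eq_abs]
      exact aux_est f C hC n hn s _ hs.1 (by positivity)) hb
    have := hd.add hx
    rw [zero_add] at this
    refine this.congr fun n => ?_
    simp
end

section
/- Let η, η′ be free ultrafilters on ℕ and t, t′ ∈ [0,1) with (η,t) ≠ (η′,t′). Then there exists a Borel set X ⊆ [1,∞) such that ψ_{(η,t)}(1_X) ≠ ψ_{(η′,t′)}(1_X); in particular the functionals ψ_{(η,t)} and ψ_{(η′,t′)} on L^∞[1,∞) are distinct. -/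
open Filter MeasureTheory

theorem aux_lim (η : Ultrafilter ℕ) (f : ℕ → ℝ) (hf : ∀ n, f n ∈ Set.Icc (0:ℝ) 1) :
    Tendsto f (η : Filter ℕ) (nhds (limUnder (η : Filter ℕ) f)) := by
  have hc : IsCompact (Set.Icc (0:ℝ) 1) := isCompact_Icc
  obtain ⟨x, _, hx⟩ := hc.ultrafilter_le_nhds (η.map f) (by
    rw [le_principal_iff]
    exact Filter.mem_map.2 (Filter.Eventually.of_forall hf))
  have hx' : Tendsto f (η : Filter ℕ) (nhds x) := hx
  rw [hx'.limUnder_eq]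
  exact hx'

theorem aux_res (η : Ultrafilter ℕ) (K : ℕ) (hK : 0 < K) : ∃ r, {n : ℕ | n % K = r} ∈ η := by
  have h : (⋃ r ∈ Set.Iio K, {n : ℕ | n % K = r}) ∈ η := by
    refine Filter.mem_of_superset (univ_mem : Set.univ ∈ (η : Filter ℕ)) ?_
    intro n _
    simp [Nat.mod_lt _ hK]
  rw [Ultrafilter.finite_biUnion_mem_iff (Set.finite_Iio K)] at h
  obtain ⟨r, _, hr⟩ := h
  exact ⟨r, hr⟩

def auxX (A : Set ℕ) (t δ : ℝ) : Set ℝ :=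
  Set.Ici 1 ∩ ⋃ n ∈ A, Set.Ioc ((2:ℝ) ^ ((n:ℝ) + t - δ)) ((2:ℝ) ^ ((n:ℝ) + t))

theorem auxX_meas (A : Set ℕ) (t δ : ℝ) : MeasurableSet (auxX A t δ) :=
  measurableSet_Ici.inter (MeasurableSet.biUnion A.to_countable fun _ _ => measurableSet_Ioc)

theorem aux_int (X : Set ℝ) (hX : MeasurableSet X) (q : ℝ) :
    ∫ y in Set.Icc (1:ℝ) ((2:ℝ) ^ q), X.indicator (fun _ => (1:ℝ)) y =
      volume.real (Set.Icc (1:ℝ) ((2:ℝ) ^ q) ∩ X) := by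
  rw [setIntegral_indicator hX]
  simp

theorem aux_fin (X : Set ℝ) (q : ℝ) : volume (Set.Icc (1:ℝ) ((2:ℝ) ^ q) ∩ X) ≠ ⊤ :=
  ne_top_of_le_ne_top (by simp) (measure_mono Set.inter_subset_left)

theorem aux_bd (X : Set ℝ) (q : ℝ) :
    (2:ℝ) ^ (-q) * volume.real (Set.Icc (1:ℝ) ((2:ℝ) ^ q) ∩ X) ∈ Set.Icc (0:ℝ) 1 := by
  have h2 : (0:ℝ) < 2 ^ q := by positivity
  refine ⟨by positivity, ?_⟩
  have h : volume.real (Set.Icc (1:ℝ) ((2:ℝ) ^ q) ∩ X) ≤ volume.real (Set.Ioc (0:ℝ) (2 ^ q)) := by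
    refine measureReal_mono ?_ (by simp)
    rintro y ⟨⟨h1, h3⟩, -⟩
    exact ⟨by linarith, h3⟩
  rw [Real.volume_real_Ioc_of_le h2.le, sub_zero] at h
  rw [Real.rpow_neg (by norm_num), inv_mul_le_iff₀ h2]
  linarith

theorem aux_low (A : Set ℕ) (t δ : ℝ) (ht : 0 ≤ t) (hδ : 0 < δ) (hδ1 : δ ≤ 1) (n : ℕ) (hn : n ∈ A)
    (hn1 : 1 ≤ n) : 1 - (2:ℝ) ^ (-δ) ≤
    (2:ℝ) ^ (-((n:ℝ) + t)) * volume.real (Set.Icc (1:ℝ) ((2:ℝ) ^ ((n:ℝ) + t)) ∩ auxX A t δ) := by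
  have hn' : (1:ℝ) ≤ n := by exact_mod_cast hn1
  have h2 : (0:ℝ) < 2 ^ ((n:ℝ) + t) := by positivity
  have hle : (2:ℝ) ^ ((n:ℝ) + t - δ) ≤ (2:ℝ) ^ ((n:ℝ) + t) :=
    Real.rpow_le_rpow_of_exponent_le (by norm_num) (by linarith)
  have h1 : (1:ℝ) ≤ (2:ℝ) ^ ((n:ℝ) + t - δ) := Real.one_le_rpow (by norm_num) (by linarith)
  have h : volume.real (Set.Ioc ((2:ℝ) ^ ((n:ℝ) + t - δ)) ((2:ℝ) ^ ((n:ℝ) + t))) ≤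
      volume.real (Set.Icc (1:ℝ) ((2:ℝ) ^ ((n:ℝ) + t)) ∩ auxX A t δ) := by
    refine measureReal_mono ?_ (aux_fin _ _)
    intro y hy
    have hy1 : 1 ≤ y := by linarith [hy.1]
    exact ⟨⟨hy1, hy.2⟩, hy1, Set.mem_biUnion hn hy⟩
  rw [Real.volume_real_Ioc_of_le hle] at h
  rw [Real.rpow_neg (by norm_num) ((n:ℝ) + t), le_inv_mul_iff₀ h2]
  rw [sub_eq_add_neg ((n:ℝ) + t), Real.rpow_add (by norm_num) _ (-δ)] at h
  linarith

theorem aux_up (A : Set ℕ) (t δ q : ℝ) (K : ℕ) (hδ : 0 < δ)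
    (hsep : ∀ n ∈ A, δ ≤ |(n:ℝ) + t - q|)
    (hA : ∀ n ∈ A, ∀ m ∈ A, n < m → n + K ≤ m) :
    (2:ℝ) ^ (-q) * volume.real (Set.Icc (1:ℝ) ((2:ℝ) ^ q) ∩ auxX A t δ) ≤
      (1/2:ℝ) ^ K + (2:ℝ) ^ (-δ) * (1 - (2:ℝ) ^ (-δ)) := by
  have h2 : (0:ℝ) < 2 ^ q := by positivity
  have hd1 : (2:ℝ) ^ (-δ) ≤ 1 := Real.rpow_le_one_of_one_le_of_nonpos (by norm_num) (by linarith)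
  have hd0 : (0:ℝ) < (2:ℝ) ^ (-δ) := by positivity
  have hK : (2:ℝ) ^ (q - K) = 2 ^ q * (1/2:ℝ) ^ K := by
    rw [sub_eq_add_neg, Real.rpow_add (by norm_num), Real.rpow_neg (by norm_num), Real.rpow_natCast]
    simp
  have hbelow : ∀ y ∈ Set.Icc (1:ℝ) ((2:ℝ) ^ q) ∩ auxX A t δ, ∃ n ∈ A, (n:ℝ) + t ≤ q - δ ∧
      y ∈ Set.Ioc ((2:ℝ) ^ ((n:ℝ) + t - δ)) ((2:ℝ) ^ ((n:ℝ) + t)) := by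
    rintro y ⟨⟨_, hy⟩, _, hyU⟩
    obtain ⟨n, hn, hyn⟩ := Set.mem_iUnion₂.1 hyU
    refine ⟨n, hn, ?_, hyn⟩
    have h3 : (n:ℝ) + t - δ < q :=
      (Real.rpow_lt_rpow_left_iff (by norm_num : (1:ℝ) < 2)).1 (hyn.1.trans_le hy)
    rcases le_abs.1 (hsep n hn) with h | h <;> linarith
  have key : volume.real (Set.Icc (1:ℝ) ((2:ℝ) ^ q) ∩ auxX A t δ) ≤
      2 ^ (q - K) + 2 ^ q * ((2:ℝ) ^ (-δ) * (1 - (2:ℝ) ^ (-δ))) := by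
    have hv : volume.real (Set.Ioc (0:ℝ) (2 ^ (q - K))) = 2 ^ (q - K) := by
      rw [Real.volume_real_Ioc_of_le (by positivity), sub_zero]
    by_cases hex : ∃ n ∈ A, (n:ℝ) + t ≤ q - δ ∧ q - K < (n:ℝ) + t
    · obtain ⟨n, hn, hn1, hn2⟩ := hex
      have hsub : Set.Icc (1:ℝ) ((2:ℝ) ^ q) ∩ auxX A t δ ⊆ Set.Ioc (0:ℝ) (2 ^ (q - K)) ∪
          Set.Ioc ((2:ℝ) ^ ((n:ℝ) + t - δ)) ((2:ℝ) ^ ((n:ℝ) + t)) := by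
        intro y hy
        obtain ⟨m, hm, hm1, hym⟩ := hbelow y hy
        rcases lt_trichotomy m n with h | h | h
        · left
          have h4 : (m:ℝ) + K ≤ n := by exact_mod_cast hA m hm n hn h
          refine ⟨by linarith [hy.1.1], hym.2.trans ?_⟩
          exact Real.rpow_le_rpow_of_exponent_le (by norm_num) (by linarith)
        · right
          rw [← h]; exact hym
        · have h4 : (n:ℝ) + K ≤ m := by exact_mod_cast hA n hn m hm h
          linarith
      have hle : (2:ℝ) ^ ((n:ℝ) + t - δ) ≤ (2:ℝ) ^ ((n:ℝ) + t) :=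
        Real.rpow_le_rpow_of_exponent_le (by norm_num) (by linarith)
      have h5 := (measureReal_mono hsub (measure_union_lt_top (by simp) (by simp)).ne).trans
        (measureReal_union_le (μ := volume) _ _)
      rw [hv, Real.volume_real_Ioc_of_le hle] at h5
      have h6 : (2:ℝ) ^ ((n:ℝ) + t) ≤ 2 ^ q * 2 ^ (-δ) := by
        rw [← Real.rpow_add (by norm_num)]
        exact Real.rpow_le_rpow_of_exponent_le (by norm_num) (by linarith)
      rw [sub_eq_add_neg ((n:ℝ) + t), Real.rpow_add (by norm_num) _ (-δ)] at h5
      nlinarith [mul_le_mul_of_nonneg_right h6 (sub_nonneg.2 hd1)]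
    · push Not at hex
      have h5 : volume.real (Set.Icc (1:ℝ) ((2:ℝ) ^ q) ∩ auxX A t δ) ≤
          volume.real (Set.Ioc (0:ℝ) (2 ^ (q - K))) := by
        refine measureReal_mono ?_ (by simp)
        intro y hy
        obtain ⟨m, hm, hm1, hym⟩ := hbelow y hy
        refine ⟨by linarith [hy.1.1], hym.2.trans ?_⟩
        exact Real.rpow_le_rpow_of_exponent_le (by norm_num) (hex m hm hm1)
      rw [hv] at h5
      have : 0 ≤ 2 ^ q * ((2:ℝ) ^ (-δ) * (1 - (2:ℝ) ^ (-δ))) :=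
        mul_nonneg h2.le (mul_nonneg hd0.le (sub_nonneg.2 hd1))
      linarith
  rw [Real.rpow_neg (by norm_num) q, inv_mul_le_iff₀ h2]
  rw [hK] at key
  linarith

theorem aux_sep (η η' : Ultrafilter ℕ)
    (t t' : ℝ) (ht : t ∈ Set.Ico (0:ℝ) 1) (ht' : t' ∈ Set.Ico (0:ℝ) 1)
    (hne : ¬(η = η' ∧ t = t')) : ∃ δ : ℝ, 0 < δ ∧ δ ≤ 1 ∧ ∃ A ∈ η, ∃ B ∈ η',
      ∀ n ∈ A, ∀ m ∈ B, δ ≤ |(n:ℝ) + t - ((m:ℝ) + t')| := by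
  by_cases h : t = t'
  · subst h
    have hn : η ≠ η' := fun h => hne ⟨h, rfl⟩
    have : ∃ A ∈ η, A ∉ η' := by
      by_contra hcon
      push Not at hcon
      exact hn (Ultrafilter.coe_le_coe.1 (fun s hs => hcon s hs)).symm
    obtain ⟨A, hA, hA'⟩ := this
    refine ⟨1, one_pos, le_rfl, A, hA, Aᶜ, Ultrafilter.compl_mem_iff_notMem.2 hA', ?_⟩
    intro n hn m hm
    have hnm : n ≠ m := fun h => hm (h ▸ hn)
    rw [le_abs]
    rcases lt_or_gt_of_ne hnm with h | h
    · have : (n:ℝ) + 1 ≤ m := by exact_mod_cast h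
      right; linarith
    · have : (m:ℝ) + 1 ≤ n := by exact_mod_cast h
      left; linarith
  · have h0 : 0 < |t - t'| := abs_pos.2 (sub_ne_zero.2 h)
    have h1 : |t - t'| < 1 := abs_lt.2 ⟨by linarith [ht.1, ht'.2], by linarith [ht.2, ht'.1]⟩
    refine ⟨min |t - t'| (1 - |t - t'|), lt_min h0 (by linarith), (min_le_left _ _).trans h1.le,
      Set.univ, univ_mem, Set.univ, univ_mem, ?_⟩
    intro n _ m _
    rcases lt_trichotomy n m with h | h | h
    · have : (n:ℝ) + 1 ≤ m := by exact_mod_cast h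
      refine (min_le_right _ _).trans (le_abs.2 (Or.inr ?_))
      linarith [le_abs_self (t - t')]
    · subst h
      refine (min_le_left _ _).trans (le_of_eq ?_)
      congr 1; ring
    · have : (m:ℝ) + 1 ≤ n := by exact_mod_cast h
      refine (min_le_right _ _).trans (le_abs.2 (Or.inl ?_))
      linarith [neg_abs_le (t - t')]

/-- If `(η,t) ≠ (η′,t′)` (with `η, η′` free ultrafilters on `ℕ` and
`t, t′ ∈ [0,1)`), there is a Borel set `X ⊆ [1,∞)` whose indicator function separates
the functionals `ψ_{(η,t)}` and `ψ_{(η′,t′)}` on `L^∞[1,∞)`, where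
`ψ_{(η,t)}(f) = η-lim_n 2^{-(n+t)} ∫_1^{2^{n+t}} f(y) dy`. -/
theorem stmt1 (η η' : Ultrafilter ℕ)
    (hη : (η : Filter ℕ) ≤ Filter.cofinite) (hη' : (η' : Filter ℕ) ≤ Filter.cofinite)
    (t t' : ℝ) (ht : t ∈ Set.Ico (0:ℝ) 1) (ht' : t' ∈ Set.Ico (0:ℝ) 1)
    (hne : ¬(η = η' ∧ t = t')) :
    ∃ X : Set ℝ, X ⊆ Set.Ici (1:ℝ) ∧ MeasurableSet X ∧
      limUnder (η : Filter ℕ)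
          (fun n : ℕ => (2:ℝ) ^ (-((n : ℝ) + t)) *
            ∫ y in Set.Icc (1:ℝ) ((2:ℝ) ^ ((n : ℝ) + t)), X.indicator (fun _ => (1:ℝ)) y) ≠
        limUnder (η' : Filter ℕ)
          (fun n : ℕ => (2:ℝ) ^ (-((n : ℝ) + t')) *
            ∫ y in Set.Icc (1:ℝ) ((2:ℝ) ^ ((n : ℝ) + t')), X.indicator (fun _ => (1:ℝ)) y) := by
  obtain ⟨δ, hδ, hδ1, A, hA, B, hB, hsep⟩ := aux_sep η η' t t' ht ht' hne
  have hd1 : (2:ℝ) ^ (-δ) < 1 := Real.rpow_lt_one_of_one_lt_of_neg (by norm_num) (by linarith)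
  obtain ⟨K, hK⟩ := exists_pow_lt_of_lt_one (pow_pos (sub_pos.2 hd1) 2)
    (by norm_num : (1/2:ℝ) < 1)
  have hK0 : 0 < K := by
    rcases Nat.eq_zero_or_pos K with h | h
    · subst h
      have : (0:ℝ) < (2:ℝ) ^ (-δ) := by positivity
      nlinarith
    · exact h
  obtain ⟨r, hr⟩ := aux_res η K hK0
  refine ⟨auxX (A ∩ {n | n % K = r}) t δ, Set.inter_subset_left, auxX_meas _ _ _, ?_⟩
  simp only [aux_int _ (auxX_meas (A ∩ {n | n % K = r}) t δ)]
  have L1 := aux_lim η _ (fun n => aux_bd (auxX (A ∩ {n | n % K = r}) t δ) ((n:ℝ) + t))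
  have L2 := aux_lim η' _ (fun n => aux_bd (auxX (A ∩ {n | n % K = r}) t δ) ((n:ℝ) + t'))
  have hη1 : ∀ᶠ n in (η : Filter ℕ), 1 ≤ n := by
    apply hη
    rw [Nat.cofinite_eq_atTop]
    exact eventually_ge_atTop 1
  have hAr : ∀ᶠ n in (η : Filter ℕ), n ∈ A ∩ {n | n % K = r} := inter_mem hA hr
  have hBe : ∀ᶠ n in (η' : Filter ℕ), n ∈ B := hB
  have b1 := ge_of_tendsto L1 (b := 1 - (2:ℝ) ^ (-δ)) (by
    filter_upwards [hη1, hAr] with n h1 h2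
    exact aux_low _ t δ ht.1 hδ hδ1 n h2 h1)
  have b2 := le_of_tendsto L2 (b := (1/2:ℝ) ^ K + (2:ℝ) ^ (-δ) * (1 - (2:ℝ) ^ (-δ))) (by
    filter_upwards [hBe] with m hm
    refine aux_up _ t δ _ K hδ (fun n hn => hsep n hn.1 m hm) ?_
    rintro n ⟨-, hn⟩ k ⟨-, hk⟩ hnk
    have hd : K ∣ k - n := (Nat.modEq_iff_dvd' hnk.le).1 (hn.trans hk.symm)
    have := Nat.le_of_dvd (by omega) hd
    omega)
  refine ne_of_gt (lt_of_le_of_lt b2 (lt_of_lt_of_le ?_ b1))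
  nlinarith
end

section
/- Define V : ℳ → 𝒞 by (Vψ)(f) = ψ(f̃), where for f ∈ ℓ∞ the function f̃ ∈ L^∞[1,∞) is given by f̃(x) = f(⌊x⌋). Then V is a well-defined affine bijection from ℳ onto 𝒞, and it is a homeomorphism with respect to the weak* topologies. -/
open Filter MeasureTheory Topology

noncomputable section

/-- Lebesgue measure restricted to `[1,∞)`. -/
abbrev muIci : Measure ℝ := volume.restrict (Set.Ici (1:ℝ))

/-- `L^∞[1,∞)`. -/
abbrev Linf : Type := Lp ℝ ⊤ muIci

/-- `ℓ∞`, the bounded (continuous, for the discrete topology) functions `ℕ → ℝ`. -/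
abbrev linf : Type := BoundedContinuousFunction ℕ ℝ

/-- `M̄(f) = limsup_{x→∞} (1/x) ∫_1^x f(t) dt`. -/
def Mbar (f : Linf) : ℝ :=
  limsup (fun x : ℝ => (1 / x) * ∫ t in Set.Icc (1:ℝ) x, f t) atTop

/-- `C̄(f) = limsup_{n→∞} (1/n) ∑_{i=1}^n f(i)`. -/
def Cbar (f : linf) : ℝ :=
  limsup (fun n : ℕ => (1 / (n : ℝ)) * ∑ i ∈ Finset.Icc 1 n, f i) atTop

/-- The class `ℳ`, as a subset of the weak-* dual of `L^∞[1,∞)`. -/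
def Mcl : Set (WeakDual ℝ Linf) := {ψ | ∀ f : Linf, ψ f ≤ Mbar f}

/-- The class `𝒞`, as a subset of the weak-* dual of `ℓ∞`. -/
def Ccl : Set (WeakDual ℝ linf) := {φ | ∀ f : linf, φ f ≤ Cbar f}

lemma Linf_bound (g : Linf) : ∀ᵐ t ∂muIci, ‖g t‖ ≤ ‖g‖ := by
  have h := ae_le_eLpNormEssSup (f := (g : ℝ → ℝ)) (μ := muIci)
  filter_upwards [h] with t ht
  have h2 : eLpNormEssSup (g : ℝ → ℝ) muIci ≠ ⊤ := by
    have := Lp.eLpNorm_ne_top g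
    rwa [eLpNorm_exponent_top] at this
  rw [Lp.norm_def, eLpNorm_exponent_top]
  have := ENNReal.toReal_mono h2 ht
  simpa using this

lemma Linf_bound' (g : Linf) : ∀ᵐ t : ℝ, 1 ≤ t → ‖g t‖ ≤ ‖g‖ := by
  have := Linf_bound g
  rw [ae_restrict_iff' measurableSet_Ici] at this
  exact this

lemma Linf_ii (g : Linf) {a b : ℝ} (ha : 1 ≤ a) (hb : 1 ≤ b) :
    IntervalIntegrable (g : ℝ → ℝ) volume a b := by
  rw [intervalIntegrable_iff]
  have hsub : Set.uIoc a b ⊆ Set.Ici 1 := by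
    intro t ht
    have := ht.1
    exact (le_min ha hb).trans this.le
  have hm : AEStronglyMeasurable (g : ℝ → ℝ) (volume.restrict (Set.uIoc a b)) :=
    (Lp.aestronglyMeasurable g).mono_measure (Measure.restrict_mono hsub le_rfl)
  haveI : IsFiniteMeasure (volume.restrict (Set.uIoc a b)) := ⟨by simp [Set.uIoc]⟩
  refine Integrable.of_bound hm ‖g‖ ?_
  · exact ae_mono (Measure.restrict_mono hsub le_rfl) (Linf_bound g)

lemma Linf_int_le (g : Linf) {a b : ℝ} (ha : 1 ≤ a) (hb : 1 ≤ b) :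
    ‖∫ t in a..b, g t‖ ≤ ‖g‖ * |b - a| := by
  apply intervalIntegral.norm_integral_le_of_norm_le_const_ae
  filter_upwards [Linf_bound' g] with t ht ht2
  exact ht ((le_min ha hb).trans ht2.1.le)

lemma int_congr (g : Linf) (h : ℝ → ℝ) (hg : (g : ℝ → ℝ) =ᵐ[muIci] h) {a b : ℝ} (ha : 1 ≤ a)
    (hb : 1 ≤ b) : ∫ t in a..b, g t = ∫ t in a..b, h t := by
  rw [Filter.EventuallyEq, ae_restrict_iff' measurableSet_Ici] at hg
  apply intervalIntegral.integral_congr_ae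
  filter_upwards [hg] with t ht ht2
  exact ht ((le_min ha hb).trans ht2.1.le)

/-- averaging -/
def avFun (g : Linf) (n : ℕ) : ℝ := if n = 0 then 0 else ∫ t in (n:ℝ)..(n+1), g t

lemma one_le_c {n : ℕ} (h : n ≠ 0) : (1:ℝ) ≤ n := by
  exact_mod_cast Nat.one_le_iff_ne_zero.mpr h

lemma avFun_le (g : Linf) (n : ℕ) : ‖avFun g n‖ ≤ ‖g‖ := by
  unfold avFun
  split_ifs with h
  · simp
  · have h1 := one_le_c h
    have := Linf_int_le g h1 (by linarith : (1:ℝ) ≤ n + 1)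
    simpa using this

def avMap : Linf →L[ℝ] linf :=
  LinearMap.mkContinuous
    { toFun := fun g => BoundedContinuousFunction.ofNormedAddCommGroupDiscrete (avFun g) ‖g‖
        (avFun_le g)
      map_add' := by
        intro g h
        ext n
        show avFun (g + h) n = avFun g n + avFun h n
        unfold avFun
        split_ifs with hn
        · simp
        · have h1 := one_le_c hn
          have h2 : (1:ℝ) ≤ n + 1 := by linarith
          rw [int_congr _ _ (Lp.coeFn_add g h) h1 h2]
          exact intervalIntegral.integral_add (Linf_ii g h1 h2) (Linf_ii h h1 h2)
      map_smul' := by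
        intro c g
        ext n
        show avFun (c • g) n = c * avFun g n
        unfold avFun
        split_ifs with hn
        · simp
        · have h1 := one_le_c hn
          have h2 : (1:ℝ) ≤ n + 1 := by linarith
          rw [int_congr _ _ (Lp.coeFn_smul c g) h1 h2]
          exact intervalIntegral.integral_const_mul c _ } 1 (by
      intro g
      rw [one_mul]
      exact (BoundedContinuousFunction.norm_le (norm_nonneg g)).2 (avFun_le g))

lemma avMap_apply (g : Linf) (n : ℕ) : avMap g n = avFun g n := rfl

lemma memLp_step (f : linf) : MemLp (fun x : ℝ => f ⌊x⌋₊) ⊤ muIci := by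
  refine memLp_top_of_bound ?_ ‖f‖ (Eventually.of_forall fun x => f.norm_coe_le_norm _)
  have : Measurable (fun x : ℝ => f ⌊x⌋₊) :=
    (measurable_of_countable (fun n : ℕ => f n)).comp Nat.measurable_floor
  exact this.aestronglyMeasurable

def stepMap : linf →L[ℝ] Linf :=
  LinearMap.mkContinuous
    { toFun := fun f => (memLp_step f).toLp _
      map_add' := fun f g => rfl
      map_smul' := fun c f => rfl } 1 (by
      intro f
      rw [one_mul]
      show ‖(memLp_step f).toLp _‖ ≤ _
      rw [Lp.norm_toLp, eLpNorm_exponent_top]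
      refine ENNReal.toReal_le_of_le_ofReal (norm_nonneg f) ?_
      exact eLpNormEssSup_le_of_ae_bound (Eventually.of_forall fun x => f.norm_coe_le_norm _))

lemma stepMap_coe (f : linf) : (stepMap f : ℝ → ℝ) =ᵐ[muIci] fun x : ℝ => f ⌊x⌋₊ :=
  (memLp_step f).coeFn_toLp

lemma av_step (f : linf) (n : ℕ) (hn : n ≠ 0) : avMap (stepMap f) n = f n := by
  rw [avMap_apply, avFun, if_neg hn]
  have h1 := one_le_c hn
  have h2 : (1:ℝ) ≤ n + 1 := by linarith
  rw [int_congr _ _ (stepMap_coe f) h1 h2]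
  have : ∫ t in (n:ℝ)..(n+1), f ⌊t⌋₊ = ∫ t in (n:ℝ)..(n+1), f n := by
    apply intervalIntegral.integral_congr_ae
    have : ∀ᵐ t : ℝ, t ≠ n + 1 := by
      simp [ae_iff]
    filter_upwards [this] with t ht ht2
    rw [Set.uIoc_of_le (by linarith)] at ht2
    have : ⌊t⌋₊ = n := by
      rw [Nat.floor_eq_iff (by linarith [ht2.1])]
      exact ⟨ht2.1.le, lt_of_le_of_ne ht2.2 ht⟩
    rw [this]
  rw [this]; simp

lemma sum_av (g : Linf) (n : ℕ) :
    ∑ i ∈ Finset.Icc 1 n, avMap g i = ∫ t in (1:ℝ)..(n+1), g t := by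
  induction n with
  | zero => simp
  | succ k ih =>
    rw [Finset.sum_Icc_succ_top (by omega), ih, avMap_apply, avFun, if_neg (by omega)]
    push_cast
    have h0 : (0:ℝ) ≤ k := Nat.cast_nonneg k
    exact intervalIntegral.integral_add_adjacent_intervals
      (Linf_ii g le_rfl (by linarith)) (Linf_ii g (by linarith) (by linarith))

lemma map_floor_atTop_R : map (fun x : ℝ => ⌊x⌋₊) atTop = (atTop : Filter ℕ) := by
  apply le_antisymm
  · exact tendsto_nat_floor_atTop
  · have h : map (fun x : ℝ => ⌊x⌋₊) (map (Nat.cast : ℕ → ℝ) atTop) = atTop := by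
      rw [Filter.map_map]
      have : ((fun x : ℝ => ⌊x⌋₊) ∘ (Nat.cast : ℕ → ℝ)) = id := by
        ext n; simp
      rw [this, Filter.map_id]
    calc (atTop : Filter ℕ) = _ := h.symm
      _ ≤ _ := Filter.map_mono tendsto_natCast_atTop_atTop

lemma limsup_le_of_sub {u v : ℝ → ℝ} {K : ℝ} (hv : ∀ᶠ x in atTop, |v x| ≤ K)
    (h : Tendsto (fun x => u x - v x) atTop (𝓝 0)) : limsup u atTop ≤ limsup v atTop := by
  have e : u = v + (fun x => u x - v x) := by ext x; simp
  have hb1 : IsBoundedUnder (· ≤ ·) atTop v :=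
    isBoundedUnder_of_eventually_le (hv.mono fun x hx => (abs_le.1 hx).2)
  have hb2 : IsBoundedUnder (· ≥ ·) atTop v :=
    isBoundedUnder_of_eventually_ge (hv.mono fun x hx => (abs_le.1 hx).1)
  calc limsup u atTop = limsup (v + (fun x => u x - v x)) atTop := by rw [← e]
    _ ≤ limsup v atTop + limsup (fun x => u x - v x) atTop :=
      limsup_add_le hb2 hb1 h.isBoundedUnder_ge.isCoboundedUnder_le h.isBoundedUnder_le
    _ = limsup v atTop := by rw [h.limsup_eq, add_zero]

lemma limsup_eq_of_sub {u v : ℝ → ℝ} {K L : ℝ} (hu : ∀ᶠ x in atTop, |u x| ≤ L)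
    (hv : ∀ᶠ x in atTop, |v x| ≤ K)
    (h : Tendsto (fun x => u x - v x) atTop (𝓝 0)) : limsup u atTop = limsup v atTop := by
  apply le_antisymm (limsup_le_of_sub hv h)
  apply limsup_le_of_sub hu
  have := h.neg
  simpa using this

lemma Mbar_eq (g : Linf) : Mbar g = Cbar (avMap g) := by
  unfold Mbar Cbar
  rw [← map_floor_atTop_R]
  show _ = limsup ((fun n : ℕ => (1 / (n : ℝ)) * ∑ i ∈ Finset.Icc 1 n, avMap g i) ∘
    fun x : ℝ => ⌊x⌋₊) atTop
  have key : ∀ x : ℝ, 1 ≤ x → ∃ I J : ℝ, (1 / x) * ∫ t in Set.Icc (1:ℝ) x, g t = 1 / x * I ∧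
      ∑ i ∈ Finset.Icc 1 ⌊x⌋₊, avMap g i = J ∧ |I| ≤ ‖g‖ * x ∧ |J| ≤ ‖g‖ * (⌊x⌋₊:ℝ) ∧
      |I - J| ≤ ‖g‖ ∧ (1:ℝ) ≤ (⌊x⌋₊ : ℝ) ∧ (⌊x⌋₊ : ℝ) ≤ x ∧ x < (⌊x⌋₊:ℝ) + 1 := by
    intro x hx
    have f1 : (1:ℝ) ≤ (⌊x⌋₊ : ℝ) := by
      exact_mod_cast (Nat.one_le_floor_iff x).2 hx
    have f2 : (⌊x⌋₊ : ℝ) ≤ x := Nat.floor_le (by linarith)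
    have f3 : x < (⌊x⌋₊:ℝ) + 1 := Nat.lt_floor_add_one x
    have f4 : (1:ℝ) ≤ (⌊x⌋₊:ℝ) + 1 := by linarith
    refine ⟨∫ t in (1:ℝ)..x, g t, ∫ t in (1:ℝ)..((⌊x⌋₊:ℝ)+1), g t, ?_, sum_av g _, ?_, ?_, ?_,
      f1, f2, f3⟩
    · rw [integral_Icc_eq_integral_Ioc, intervalIntegral.integral_of_le hx]
    · refine (Linf_int_le g le_rfl hx).trans ?_
      rw [abs_of_nonneg (by linarith)]
      exact mul_le_mul_of_nonneg_left (by linarith) (norm_nonneg g)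
    · refine (Linf_int_le g le_rfl f4).trans ?_
      rw [abs_of_nonneg (by linarith)]
      exact mul_le_mul_of_nonneg_left (by linarith) (norm_nonneg g)
    · rw [intervalIntegral.integral_interval_sub_left (Linf_ii g le_rfl hx)
        (Linf_ii g le_rfl f4)]
      refine (Linf_int_le g f4 hx).trans ?_
      have : |x - ((⌊x⌋₊:ℝ) + 1)| ≤ 1 := by rw [abs_le]; constructor <;> linarith
      exact mul_le_of_le_one_right (norm_nonneg g) this
  have hg := norm_nonneg g
  apply limsup_eq_of_sub (K := ‖g‖) (L := ‖g‖)
  · filter_upwards [eventually_ge_atTop 1] with x hx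
    obtain ⟨I, J, e1, e2, hI, hJ, hIJ, f1, f2, f3⟩ := key x hx
    rw [e1, abs_mul, abs_of_nonneg (by positivity), one_div, inv_mul_le_iff₀ (by linarith)]
    linarith
  · filter_upwards [eventually_ge_atTop 1] with x hx
    obtain ⟨I, J, e1, e2, hI, hJ, hIJ, f1, f2, f3⟩ := key x hx
    simp only [Function.comp]
    rw [e2, abs_mul, abs_of_nonneg (by positivity), one_div, inv_mul_le_iff₀ (by linarith)]
    linarith
  · have lim : Tendsto (fun x : ℝ => 2 * ‖g‖ * x⁻¹) atTop (𝓝 0) := by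
      simpa using tendsto_inv_atTop_zero.const_mul (2 * ‖g‖)
    refine squeeze_zero_norm' ?_ lim
    filter_upwards [eventually_ge_atTop 1] with x hx
    obtain ⟨I, J, e1, e2, hI, hJ, hIJ, f1, f2, f3⟩ := key x hx
    simp only [Function.comp]
    rw [e1, e2]
    set m : ℝ := (⌊x⌋₊ : ℝ)
    have hx0 : (0:ℝ) < x := by linarith
    have hm0 : (0:ℝ) < m := by linarith
    have e3 : 1 / x * I - 1 / m * J = ((I - J) + (m - x) * (J / m)) * x⁻¹ := by
      field_simp; ring
    rw [e3, Real.norm_eq_abs, abs_mul, abs_of_pos (inv_pos.2 hx0)]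
    refine mul_le_mul_of_nonneg_right ?_ (inv_pos.2 hx0).le
    have h4 : |J / m| ≤ ‖g‖ := by
      rw [abs_div, abs_of_pos hm0, div_le_iff₀ hm0]; exact hJ
    have h5 : |m - x| ≤ 1 := by rw [abs_le]; constructor <;> linarith
    have h6 : |(m - x) * (J / m)| ≤ 1 * ‖g‖ := by
      rw [abs_mul]; exact mul_le_mul h5 h4 (abs_nonneg _) zero_le_one
    have := abs_add_le (I - J) ((m - x) * (J / m))
    linarith

lemma Cbar_congr (f g : linf) (h : ∀ n, n ≠ 0 → f n = g n) : Cbar f = Cbar g := by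
  unfold Cbar
  congr 1
  ext n
  congr 1
  refine Finset.sum_congr rfl fun i hi => h i ?_
  have := (Finset.mem_Icc.1 hi).1
  omega

lemma Cbar_zero : Cbar 0 = 0 := by
  unfold Cbar; simp

lemma Mbar_step (f : linf) : Mbar (stepMap f) = Cbar f := by
  rw [Mbar_eq]; exact Cbar_congr _ _ fun n hn => av_step f n hn

lemma C_eq (φ : WeakDual ℝ linf) (hφ : φ ∈ Ccl) (f g : linf) (h : ∀ n, n ≠ 0 → f n = g n) :
    φ f = φ g := by
  have a : ∀ f g : linf, (∀ n, n ≠ 0 → f n = g n) → φ f ≤ φ g := by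
    intro f g h
    have h1 := hφ (f - g)
    rw [Cbar_congr (f - g) 0 (fun n hn => by simp [h n hn]), Cbar_zero, map_sub] at h1
    linarith
  exact le_antisymm (a f g h) (a g f fun n hn => (h n hn).symm)

lemma M_eq (ψ : WeakDual ℝ Linf) (hψ : ψ ∈ Mcl) (f g : Linf)
    (h : ∀ n, n ≠ 0 → avMap f n = avMap g n) :
    ψ f = ψ g := by
  have a : ∀ f g : Linf, (∀ n, n ≠ 0 → avMap f n = avMap g n) → ψ f ≤ ψ g := by
    intro f g h
    have h1 := hψ (f - g)
    rw [Mbar_eq, map_sub avMap, Cbar_congr (avMap f - avMap g) 0 (fun n hn => by simp [h n hn]),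
      Cbar_zero, map_sub] at h1
    linarith
  exact le_antisymm (a f g h) (a g f fun n hn => (h n hn).symm)

def pull {E F : Type*} [NormedAddCommGroup E] [NormedSpace ℝ E] [NormedAddCommGroup F]
    [NormedSpace ℝ F] (T : E →L[ℝ] F) (ψ : WeakDual ℝ F) : WeakDual ℝ E :=
  StrongDual.toWeakDual ((WeakDual.toStrongDual ψ).comp T)

lemma pull_apply {E F : Type*} [NormedAddCommGroup E] [NormedSpace ℝ E] [NormedAddCommGroup F]
    [NormedSpace ℝ F] (T : E →L[ℝ] F) (ψ : WeakDual ℝ F) (x : E) : pull T ψ x = ψ (T x) := rfl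

lemma pull_cont {E F : Type*} [NormedAddCommGroup E] [NormedSpace ℝ E] [NormedAddCommGroup F]
    [NormedSpace ℝ F] (T : E →L[ℝ] F) : Continuous (pull T) :=
  WeakDual.continuous_of_continuous_eval fun y => WeakDual.eval_continuous (T y)

def Vhomeo : Mcl ≃ₜ Ccl where
  toFun ψ := ⟨pull stepMap ψ.1, fun f => by
    rw [pull_apply, ← Mbar_step]; exact ψ.2 _⟩
  invFun φ := ⟨pull avMap φ.1, fun g => by
    rw [pull_apply, Mbar_eq]; exact φ.2 _⟩
  left_inv ψ := by
    apply Subtype.ext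
    refine DFunLike.ext _ _ fun g => ?_
    exact M_eq ψ.1 ψ.2 _ _ fun n hn => av_step _ n hn
  right_inv φ := by
    apply Subtype.ext
    refine DFunLike.ext _ _ fun f => ?_
    exact C_eq φ.1 φ.2 _ _ fun n hn => av_step _ n hn
  continuous_toFun := ((pull_cont stepMap).comp continuous_subtype_val).subtype_mk _
  continuous_invFun := ((pull_cont avMap).comp continuous_subtype_val).subtype_mk _

/-- The map `V : ℳ → 𝒞`, `(Vψ)(f) = ψ(f̃)` with `f̃(x) = f(⌊x⌋)`, is a
well-defined affine bijection of `ℳ` onto `𝒞` and a homeomorphism for the weak-*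
topologies. -/
theorem stmt3 :
    ∃ V : Mcl ≃ₜ Ccl,
      (∀ (ψ : Mcl) (f : linf) (h : Linf),
          (⇑h : ℝ → ℝ) =ᵐ[muIci] (fun x : ℝ => f ⌊x⌋₊) →
          (V ψ : WeakDual ℝ linf) f = (ψ : WeakDual ℝ Linf) h) ∧
      (∀ a b : ℝ, 0 ≤ a → 0 ≤ b → a + b = 1 →
        ∀ ψ₁ ψ₂ ψ₃ : Mcl, (ψ₃ : WeakDual ℝ Linf) = a • (ψ₁ : WeakDual ℝ Linf) + b • ψ₂ →
          (V ψ₃ : WeakDual ℝ linf) = a • (V ψ₁ : WeakDual ℝ linf) + b • (V ψ₂ : WeakDual ℝ linf)) := by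
  refine ⟨Vhomeo, ?_, ?_⟩
  · intro ψ f h hh
    have : h = stepMap f := Lp.ext (hh.trans (stepMap_coe f).symm)
    rw [this]
    rfl
  · intro a b _ _ _ ψ₁ ψ₂ ψ₃ h
    refine DFunLike.ext _ _ fun f => ?_
    show ψ₃.1 (stepMap f) = a * ψ₁.1 (stepMap f) + b * ψ₂.1 (stepMap f)
    rw [h]
    rfl
end
end

section
/- The set 𝓜̃ = {ψ^𝒰 : 𝒰 an ultrafilter on [1,∞) containing no bounded subset of [1,∞)} is a weak*-compact subset of the dual of L^∞[1,∞), and every extreme point of the convex set ℳ belongs to 𝓜̃. -/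
open Filter MeasureTheory Topology

noncomputable section

/-- `𝒰` is an ultrafilter on `[1,∞)` containing no bounded subset of `[1,∞)`. -/
def UnbddUF (𝒰 : Ultrafilter ℝ) : Prop :=
  Set.Ici (1:ℝ) ∈ 𝒰 ∧ ∀ B ⊆ Set.Ici (1:ℝ), Bornology.IsBounded B → B ∉ 𝒰

/-- `ψ^𝒰(f) = 𝒰-lim_x (1/x)∫_1^x f(t) dt`. -/
def psiU (𝒰 : Ultrafilter ℝ) (f : Linf) : ℝ :=
  limUnder (𝒰 : Filter ℝ) (fun x : ℝ => (1 / x) * ∫ t in Set.Icc (1:ℝ) x, f t)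

/-- `𝓜̃ = {ψ^𝒰 : 𝒰 an ultrafilter on [1,∞) containing no bounded set}`. -/
def Mtilde : Set (WeakDual ℝ Linf) :=
  {ψ | ∃ 𝒰 : Ultrafilter ℝ, UnbddUF 𝒰 ∧ ∀ f : Linf, ψ f = psiU 𝒰 f}

/-- The average of `f` over `[1,x]`. -/
def avgF (f : Linf) (x : ℝ) : ℝ := (1 / x) * ∫ t in Set.Icc (1:ℝ) x, f t

lemma ae_bound (f : Linf) (x : ℝ) : ∀ᵐ t ∂(volume.restrict (Set.Icc (1:ℝ) x)), ‖f t‖ ≤ ‖f‖ := by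
  have h : ∀ᵐ t ∂muIci, ‖f t‖ ≤ ‖f‖ := by
    have h1 := ae_le_eLpNormEssSup (f := f) (μ := muIci)
    filter_upwards [h1] with t ht
    rw [Lp.norm_def, eLpNorm_exponent_top]
    have h2 : eLpNormEssSup f muIci ≠ ⊤ := by
      have := Lp.eLpNorm_ne_top f
      rwa [eLpNorm_exponent_top] at this
    have := ENNReal.toReal_mono h2 ht
    simpa using this
  exact ae_mono (Measure.restrict_mono Set.Icc_subset_Ici_self le_rfl) h

lemma integ (f : Linf) (x : ℝ) : IntegrableOn f (Set.Icc (1:ℝ) x) volume := by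
  refine Measure.integrableOn_of_bounded (M := ‖f‖) (by simp) ?_ (ae_bound f x)
  exact (Lp.stronglyMeasurable f).aestronglyMeasurable

lemma avgF_abs (f : Linf) (x : ℝ) : |avgF f x| ≤ ‖f‖ := by
  unfold avgF
  rcases lt_or_ge x 1 with hx | hx
  · simp [Set.Icc_eq_empty (not_le.2 hx)]
  · have h := norm_setIntegral_le_of_norm_le_const_ae (μ := volume) (s := Set.Icc (1:ℝ) x)
      (C := ‖f‖) (f := f) (by simp) (by
        exact ae_bound f x)
    rw [Real.norm_eq_abs] at h
    have hv : volume.real (Set.Icc (1:ℝ) x) = x - 1 := by simp [hx]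
    rw [hv] at h
    have hx0 : 0 < x := by linarith
    rw [abs_mul, abs_of_pos (by positivity : 0 < 1 / x), one_div, inv_mul_le_iff₀ hx0]
    nlinarith [norm_nonneg f]

lemma avgF_add (f g : Linf) (x : ℝ) : avgF (f + g) x = avgF f x + avgF g x := by
  unfold avgF
  rw [← mul_add, ← integral_add (integ f x) (integ g x)]
  congr 1
  apply integral_congr_ae
  exact ae_mono (Measure.restrict_mono Set.Icc_subset_Ici_self le_rfl) (Lp.coeFn_add f g)

lemma avgF_smul (c : ℝ) (f : Linf) (x : ℝ) : avgF (c • f) x = c * avgF f x := by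
  unfold avgF
  rw [mul_left_comm c, ← integral_const_mul c]
  congr 1
  apply integral_congr_ae
  exact ae_mono (Measure.restrict_mono Set.Icc_subset_Ici_self le_rfl) (Lp.coeFn_smul c f)

/-- The average as a map to a compact interval. -/
def avgI (f : Linf) (x : ℝ) : Set.Icc (-‖f‖) ‖f‖ := ⟨avgF f x, abs_le.1 (avgF_abs f x)⟩

lemma tendsto_ext (f : Linf) (𝒰 : Ultrafilter ℝ) :
    Tendsto (avgF f) 𝒰 (𝓝 ((Ultrafilter.extend (avgI f) 𝒰 : Set.Icc (-‖f‖) ‖f‖) : ℝ)) := by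
  have h := (ultrafilter_extend_eq_iff (f := avgI f) (b := 𝒰)).1 rfl
  exact (continuous_subtype_val.tendsto _).comp h

lemma psiU_eq (f : Linf) (𝒰 : Ultrafilter ℝ) :
    psiU 𝒰 f = ((Ultrafilter.extend (avgI f) 𝒰 : Set.Icc (-‖f‖) ‖f‖) : ℝ) :=
  (tendsto_ext f 𝒰).limUnder_eq

lemma tendsto_psi (f : Linf) (𝒰 : Ultrafilter ℝ) :
    Tendsto (avgF f) 𝒰 (𝓝 (psiU 𝒰 f)) := by
  rw [psiU_eq]; exact tendsto_ext f 𝒰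

lemma psi_cont (f : Linf) : Continuous (fun 𝒰 => psiU 𝒰 f) := by
  simp only [psiU_eq]
  exact continuous_subtype_val.comp (continuous_ultrafilter_extend _)

/-- `ψ^𝒰` as an element of the weak dual. -/
def Psi (𝒰 : Ultrafilter ℝ) : WeakDual ℝ Linf :=
  StrongDual.toWeakDual (LinearMap.mkContinuous
    { toFun := psiU 𝒰
      map_add' := fun f g => by
        refine tendsto_nhds_unique (tendsto_psi (f + g) 𝒰) ?_
        have := (tendsto_psi f 𝒰).add (tendsto_psi g 𝒰)
        exact this.congr fun x => (avgF_add f g x).symm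
      map_smul' := fun c f => by
        refine tendsto_nhds_unique (tendsto_psi (c • f) 𝒰) ?_
        have := (tendsto_psi f 𝒰).const_mul c
        exact this.congr fun x => (avgF_smul c f x).symm }
    1 (fun f => by
      rw [one_mul]
      refine le_of_tendsto (tendsto_psi f 𝒰).norm (Eventually.of_forall fun x => ?_)
      exact avgF_abs f x))

lemma Psi_apply (𝒰 : Ultrafilter ℝ) (f : Linf) : Psi 𝒰 f = psiU 𝒰 f := rfl

lemma le_atTop_iff' (l : Filter ℝ) : l ≤ atTop ↔ ∀ a : ℝ, Set.Ici a ∈ l := by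
  simp [atTop, le_iInf_iff]

lemma unbdd_iff (𝒰 : Ultrafilter ℝ) : UnbddUF 𝒰 ↔ (𝒰 : Filter ℝ) ≤ atTop := by
  constructor
  · rintro ⟨h1, h2⟩
    rw [le_atTop_iff']
    intro a
    have h3 := h2 (Set.Ico 1 a) Set.Ico_subset_Ici_self (Metric.isBounded_Ico 1 a)
    rw [← Ultrafilter.compl_mem_iff_notMem] at h3
    refine mem_of_superset (inter_mem h1 h3) ?_
    rintro x ⟨hx1, hx2⟩
    by_contra hx
    exact hx2 ⟨hx1, not_le.1 hx⟩
  · intro h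
    refine ⟨h (Ici_mem_atTop 1), fun B _ hb hB => ?_⟩
    obtain ⟨M, hM⟩ := hb.bddAbove
    have h1 := h (Ioi_mem_atTop M)
    have h2 := 𝒰.nonempty_of_mem (inter_mem hB h1)
    obtain ⟨x, hx1, hx2⟩ := h2
    exact absurd (hM hx1) (not_le.2 hx2)

lemma Mtilde_eq : Mtilde = Psi '' {𝒰 : Ultrafilter ℝ | (𝒰 : Filter ℝ) ≤ atTop} := by
  ext ψ
  constructor
  · rintro ⟨𝒰, h, h'⟩
    exact ⟨𝒰, (unbdd_iff 𝒰).1 h, DFunLike.ext _ _ fun f => (h' f).symm⟩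
  · rintro ⟨𝒰, h, rfl⟩
    exact ⟨𝒰, (unbdd_iff 𝒰).2 h, fun f => rfl⟩

lemma Mtilde_compact : IsCompact Mtilde := by
  rw [Mtilde_eq]
  refine IsCompact.image ?_ (WeakDual.continuous_of_continuous_eval fun f => psi_cont f)
  refine IsClosed.isCompact ?_
  have : {𝒰 : Ultrafilter ℝ | (𝒰 : Filter ℝ) ≤ atTop} = ⋂ a : ℝ, {𝒰 | Set.Ici a ∈ 𝒰} := by
    ext 𝒰
    simp [le_atTop_iff']
  rw [this]
  exact isClosed_iInter fun a => ultrafilter_isClosed_basic _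

lemma avg_bdd (f : Linf) (l : Filter ℝ) : IsBoundedUnder (· ≤ ·) l (avgF f) :=
  isBoundedUnder_of ⟨‖f‖, fun x => (abs_le.1 (avgF_abs f x)).2⟩

lemma avg_bdd' (f : Linf) (l : Filter ℝ) : IsBoundedUnder (· ≥ ·) l (avgF f) :=
  isBoundedUnder_of ⟨-‖f‖, fun x => (abs_le.1 (avgF_abs f x)).1⟩

lemma Mtilde_sub : Mtilde ⊆ Mcl := by
  rintro ψ ⟨𝒰, h, h'⟩ f
  rw [h' f, ← (tendsto_psi f 𝒰).limsup_eq]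
  exact limsup_le_limsup_of_le ((unbdd_iff 𝒰).1 h)
    (avg_bdd' f _).isCoboundedUnder_le (avg_bdd f _)

lemma Mbar_le (f : Linf) : Mbar f ≤ ‖f‖ :=
  limsup_le_of_le (avg_bdd' f _).isCoboundedUnder_le
    (Eventually.of_forall fun x => (abs_le.1 (avgF_abs f x)).2)

lemma Mcl_convex : Convex ℝ Mcl := by
  intro φ hφ ψ hψ a b ha hb hab f
  have h1 := mul_le_mul_of_nonneg_left (hφ f) ha
  have h2 := mul_le_mul_of_nonneg_left (hψ f) hb
  have : (a • φ + b • ψ) f = a * φ f + b * ψ f := rfl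
  rw [this]
  calc _ ≤ a * Mbar f + b * Mbar f := add_le_add h1 h2
    _ = Mbar f := by rw [← add_mul, hab, one_mul]

lemma Mcl_compact : IsCompact Mcl := by
  refine (WeakDual.isCompact_closedBall (0 : StrongDual ℝ Linf) 1).of_isClosed_subset ?_ ?_
  · have : Mcl = ⋂ f : Linf, {ψ : WeakDual ℝ Linf | ψ f ≤ Mbar f} := by
      ext ψ; simp [Mcl]
    rw [this]
    exact isClosed_iInter fun f => isClosed_le (WeakDual.eval_continuous f) continuous_const
  · intro ψ hψ
    simp only [Set.mem_preimage, mem_closedBall_zero_iff]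
    refine ContinuousLinearMap.opNorm_le_bound _ zero_le_one fun f => ?_
    rw [one_mul, Real.norm_eq_abs, abs_le]
    have h1 := (hψ f).trans (Mbar_le f)
    have h2 := (hψ (-f)).trans (Mbar_le (-f))
    rw [map_neg, norm_neg] at h2
    exact ⟨by change _ ≤ ψ f; linarith, h1⟩

lemma Mcl_sub : Mcl ⊆ closedConvexHull ℝ Mtilde := by
  intro ψ hψ
  by_contra hn
  haveI : LocallyConvexSpace ℝ (WeakDual ℝ Linf) :=
    inferInstanceAs (LocallyConvexSpace ℝ (WeakBilin (topDualPairing ℝ Linf)))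
  obtain ⟨L, s, hL, hs⟩ := geometric_hahn_banach_closed_point
    (convex_closedConvexHull (𝕜 := ℝ) (s := Mtilde)) isClosed_closedConvexHull hn
  obtain ⟨f, hf⟩ := LinearMap.dualEmbedding_surjective (topDualPairing ℝ Linf) L
  have hLf : ∀ φ : WeakDual ℝ Linf, L φ = φ f := fun φ => by rw [← hf]; rfl
  rw [hLf] at hs
  have hlt : s < Mbar f := hs.trans_le (hψ f)
  have hfr : ∃ᶠ x in atTop, s < avgF f x :=
    frequently_lt_of_lt_limsup (avg_bdd' f _).isCoboundedUnder_le hlt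
  have hne : (atTop ⊓ 𝓟 {x | s < avgF f x}).NeBot := by
    exact frequently_mem_iff_neBot.1 hfr
  let 𝒰 := Ultrafilter.of (atTop ⊓ 𝓟 {x | s < avgF f x})
  have hU : (𝒰 : Filter ℝ) ≤ atTop ⊓ 𝓟 {x | s < avgF f x} := Ultrafilter.of_le _
  have hmem : Psi 𝒰 ∈ Mtilde := by
    rw [Mtilde_eq]; exact ⟨𝒰, hU.trans inf_le_left, rfl⟩
  have h1 := hL _ (subset_closedConvexHull hmem)
  rw [hLf, Psi_apply] at h1
  have h2 : ∀ᶠ x in (𝒰 : Filter ℝ), s < avgF f x := (hU.trans inf_le_right) (mem_principal_self _)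
  have h3 := ge_of_tendsto (tendsto_psi f 𝒰) (h2.mono fun x hx => hx.le)
  linarith

section
variable {E : Type*} [AddCommGroup E] [Module ℝ E] [TopologicalSpace E]
  [IsTopologicalAddGroup E] [ContinuousSMul ℝ E] [T2Space E]

lemma compact_join {A B : Set E} (hA : IsCompact A) (hB : IsCompact B) :
    IsCompact (convexJoin ℝ A B) := by
  have : convexJoin ℝ A B =
      (fun p : ℝ × E × E => (1 - p.1) • p.2.1 + p.1 • p.2.2) '' (Set.Icc 0 1 ×ˢ (A ×ˢ B)) := by
    ext x
    simp only [mem_convexJoin, segment_eq_image, Set.mem_image, Set.mem_prod, Prod.exists]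
    constructor
    · rintro ⟨a, ha, b, hb, t, ht, rfl⟩
      exact ⟨t, a, b, ⟨ht, ha, hb⟩, rfl⟩
    · rintro ⟨t, a, b, ⟨ht, ha, hb⟩, rfl⟩
      exact ⟨a, ha, b, hb, t, ht, rfl⟩
  rw [this]
  exact (isCompact_Icc.prod (hA.prod hB)).image (by fun_prop)

lemma two_sets {K A B : Set E} (hK : IsCompact K) (hc : Convex ℝ K) (hA : A ⊆ K) (hB : B ⊆ K)
    {x : E} (hx : x ∈ Set.extremePoints ℝ K) (h : x ∈ closedConvexHull ℝ (A ∪ B)) :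
    x ∈ closedConvexHull ℝ A ∨ x ∈ closedConvexHull ℝ B := by
  rcases A.eq_empty_or_nonempty with rfl | hA0
  · right; simpa using h
  rcases B.eq_empty_or_nonempty with rfl | hB0
  · left; simpa using h
  have hAK : closedConvexHull ℝ A ⊆ K := closedConvexHull_min hA hc hK.isClosed
  have hBK : closedConvexHull ℝ B ⊆ K := closedConvexHull_min hB hc hK.isClosed
  have hAc := hK.of_isClosed_subset isClosed_closedConvexHull hAK
  have hBc := hK.of_isClosed_subset isClosed_closedConvexHull hBK
  have hA1 : (closedConvexHull ℝ A : Set E).Nonempty := hA0.mono subset_closedConvexHull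
  have hB1 : (closedConvexHull ℝ B : Set E).Nonempty := hB0.mono subset_closedConvexHull
  have hsub : closedConvexHull ℝ (A ∪ B) ⊆
      convexJoin ℝ (closedConvexHull ℝ A) (closedConvexHull ℝ B) := by
    refine closedConvexHull_min (Set.union_subset ?_ ?_) ?_ (compact_join hAc hBc).isClosed
    · exact subset_closedConvexHull.trans (subset_convexJoin_left hB1)
    · exact subset_closedConvexHull.trans (subset_convexJoin_right hA1)
    · exact convex_closedConvexHull.convexJoin convex_closedConvexHull
  obtain ⟨a, ha, b, hb, hab⟩ := mem_convexJoin.1 (hsub h)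
  rcases (mem_extremePoints_iff_forall_segment.1 hx).2 a (hAK ha) b (hBK hb) hab with rfl | rfl
  · exact Or.inl ha
  · exact Or.inr hb

end

/-- `𝓜̃` is weak-*-compact, and every extreme point of `ℳ` lies in `𝓜̃`. -/
theorem stmt8 : IsCompact Mtilde ∧ Set.extremePoints ℝ Mcl ⊆ Mtilde := by
  refine ⟨Mtilde_compact, fun ψ hψ => ?_⟩
  by_contra hn
  have key : ψ ∉ closedConvexHull ℝ (Mtilde ∩ Mcl) := by
    refine Mtilde_compact.induction_on (p := fun T => ψ ∉ closedConvexHull ℝ (T ∩ Mcl))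
      ?_ ?_ ?_ ?_
    · intro h
      rw [Set.empty_inter] at h
      exact closedConvexHull_min (Set.empty_subset ∅) convex_empty isClosed_empty h
    · intro s t hst ht hs
      exact ht ((closedConvexHull ℝ).monotone (Set.inter_subset_inter_left _ hst) hs)
    · intro s t hs ht h
      rw [Set.union_inter_distrib_right] at h
      rcases two_sets Mcl_compact Mcl_convex Set.inter_subset_right Set.inter_subset_right hψ h
        with h | h
      · exact hs h
      · exact ht h
    · intro φ hφ
      have hne : φ ≠ ψ := fun h => hn (h ▸ hφ)
      obtain ⟨f, hf⟩ : ∃ f, φ f ≠ ψ f := by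
        by_contra! hc
        exact hne (DFunLike.ext _ _ hc)
      have hd : 0 < |ψ f - φ f| := abs_pos.2 (sub_ne_zero.2 hf.symm)
      let T : Set (WeakDual ℝ Linf) :=
        (fun χ : WeakDual ℝ Linf => χ f) ⁻¹' Metric.closedBall (φ f) (|ψ f - φ f| / 2)
      have hcont : Continuous (fun χ : WeakDual ℝ Linf => χ f) := WeakDual.eval_continuous f
      have hTc : IsClosed T := Metric.isClosed_closedBall.preimage hcont
      have hTv : Convex ℝ T := by
        refine (convex_closedBall (φ f) (|ψ f - φ f| / 2)).is_linear_preimage ?_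
        exact ⟨fun _ _ => rfl, fun _ _ => rfl⟩
      refine ⟨T, mem_nhdsWithin_of_mem_nhds
        (hcont.continuousAt (Metric.closedBall_mem_nhds _ (by positivity))), fun h => ?_⟩
      have h1 : ψ ∈ T := closedConvexHull_min Set.inter_subset_left hTv hTc h
      have h2 : |ψ f - φ f| ≤ |ψ f - φ f| / 2 := h1
      linarith
  rw [Set.inter_eq_left.2 Mtilde_sub] at key
  exact key (Mcl_sub hψ.1)
end
end

section
/- Let f, g : [1,∞) → ℝ be bounded uniformly continuous functions such that the functions x ↦ x·f(x) and x ↦ x·g(x) are differentiable at almost every x ∈ [1,∞) and their derivatives (defined almost everywhere) are essentially bounded. Then the function x ↦ x·f(x)·g(x) is differentiable at almost every x ∈ [1,∞) and its derivative is essentially bounded. (The set 𝔘 = {f ∈ C_ub([1,∞)) : (x f(x))′ exists a.e. and lies in L^∞[1,∞)} is closed under multiplication, hence is a subalgebra of C_ub([1,∞)).) -/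
open Filter MeasureTheory

noncomputable section

/-- If `f, g` are bounded uniformly continuous functions on `[1,∞)` such
that `x·f(x)` and `x·g(x)` are differentiable at almost every `x ∈ [1,∞)` with essentially
bounded derivatives, then `x·f(x)g(x)` has the same property.  (The class `𝔘` is closed
under multiplication.) -/
theorem stmt10 (f g : ℝ → ℝ)
    (hfu : UniformContinuousOn f (Set.Ici (1:ℝ)))
    (hgu : UniformContinuousOn g (Set.Ici (1:ℝ)))
    (hfb : ∃ C : ℝ, ∀ x ∈ Set.Ici (1:ℝ), |f x| ≤ C)
    (hgb : ∃ C : ℝ, ∀ x ∈ Set.Ici (1:ℝ), |g x| ≤ C)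
    (hf' : ∃ C : ℝ, ∀ᵐ x ∂muIci,
      ∃ d : ℝ, HasDerivWithinAt (fun y : ℝ => y * f y) d (Set.Ici (1:ℝ)) x ∧ |d| ≤ C)
    (hg' : ∃ C : ℝ, ∀ᵐ x ∂muIci,
      ∃ d : ℝ, HasDerivWithinAt (fun y : ℝ => y * g y) d (Set.Ici (1:ℝ)) x ∧ |d| ≤ C) :
    ∃ C : ℝ, ∀ᵐ x ∂muIci,
      ∃ d : ℝ, HasDerivWithinAt (fun y : ℝ => y * (f y * g y)) d (Set.Ici (1:ℝ)) x ∧ |d| ≤ C := by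
  obtain ⟨A, hA⟩ := hfb
  obtain ⟨B, hB⟩ := hgb
  obtain ⟨C, hC⟩ := hf'
  obtain ⟨D, hD⟩ := hg'
  refine ⟨C * B + A * D + A * B, ?_⟩
  filter_upwards [hC, hD, ae_restrict_mem measurableSet_Ici] with x h1 h2 hx
  obtain ⟨p, hp, hpC⟩ := h1
  obtain ⟨q, hq, hqD⟩ := h2
  have hx1 : (1:ℝ) ≤ x := hx
  have hx0 : x ≠ 0 := by positivity
  refine ⟨p * g x + f x * q - f x * g x, ?_, ?_⟩
  · have h := (hp.mul hq).div (hasDerivWithinAt_id x (Set.Ici (1:ℝ))) hx0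
    have h3 := h.congr_of_mem (f₁ := fun y : ℝ => y * (f y * g y)) ?_ hx
    · refine h3.congr_deriv ?_
      simp only [Pi.mul_apply, id]
      field_simp
    · intro y hy
      have hy1 : (1:ℝ) ≤ y := hy
      have hy0 : y ≠ 0 := by positivity
      simp only [Pi.mul_apply, Pi.div_apply, id]
      field_simp
  · have hfx := hA x hx
    have hgx := hB x hx
    have e1 : |p * g x| ≤ C * B := by
      rw [abs_mul]
      exact mul_le_mul hpC hgx (abs_nonneg _) ((abs_nonneg _).trans hpC)
    have e2 : |f x * q| ≤ A * D := by
      rw [abs_mul]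
      exact mul_le_mul hfx hqD (abs_nonneg _) ((abs_nonneg _).trans hfx)
    have e3 : |f x * g x| ≤ A * B := by
      rw [abs_mul]
      exact mul_le_mul hfx hgx (abs_nonneg _) ((abs_nonneg _).trans hfx)
    rw [abs_le] at *
    constructor <;> linarith [e1.1, e1.2, e2.1, e2.2, e3.1, e3.2]
end
end

section
/- For every φ ∈ 𝒞 there exists a unique regular Borel probability measure μ on the compact Hausdorff space 𝒞̃ (equipped with the weak* topology) such that φ(f) = ∫_{𝒞̃} χ(f) dμ(χ) for every f ∈ ℓ∞. (Note that for each f ∈ ℓ∞ the evaluation map χ ↦ χ(f) is continuous on 𝒞̃.) -/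
open Filter MeasureTheory Topology

noncomputable section

/-- `𝒞̃ = {φ^𝒰 : 𝒰 a free ultrafilter on ℕ}`, with the weak-* topology. -/
def Ctilde : Set (WeakDual ℝ linf) :=
  {φ | ∃ 𝒰 : Ultrafilter ℕ, (𝒰 : Filter ℕ) ≤ Filter.cofinite ∧ ∀ f : linf,
    φ f = limUnder (𝒰 : Filter ℕ) (fun n : ℕ => (1 / (n : ℝ)) * ∑ i ∈ Finset.Icc 1 n, f i)}

instance : MeasurableSpace Ctilde := borel Ctilde
instance : BorelSpace Ctilde := ⟨rfl⟩

def Aav (f : linf) (n : ℕ) : ℝ := (1 / (n : ℝ)) * ∑ i ∈ Finset.Icc 1 n, f i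

lemma Aav_succ (f : linf) (n : ℕ) : ((n : ℝ) + 1) * Aav f (n + 1) = n * Aav f n + f (n + 1) := by
  unfold Aav
  rw [Finset.sum_Icc_succ_top (by omega)]
  rcases Nat.eq_zero_or_pos n with h | h
  · subst h; simp
  · have : (n : ℝ) ≠ 0 := by positivity
    have : (n : ℝ) + 1 ≠ 0 := by positivity
    push_cast
    field_simp

lemma Aav_bound (f : linf) (n : ℕ) : |Aav f n| ≤ ‖f‖ := by
  induction n with
  | zero => simp [Aav]
  | succ n ih =>
    have h := Aav_succ f n
    have h1 : |f (n + 1)| ≤ ‖f‖ := f.norm_coe_le_norm (n + 1)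
    have hn : (0 : ℝ) < (n : ℝ) + 1 := by positivity
    have h2 : ((n : ℝ) + 1) * |Aav f (n + 1)| ≤ ((n : ℝ) + 1) * ‖f‖ := by
      rw [← abs_of_pos hn, ← abs_mul, abs_of_pos hn, h]
      refine (abs_add_le _ _).trans ?_
      rw [abs_mul, Nat.abs_cast]
      nlinarith [mul_le_mul_of_nonneg_left ih (Nat.cast_nonneg (α := ℝ) n)]
    exact le_of_mul_le_mul_left h2 hn

lemma Aav_add (f g : linf) (n : ℕ) : Aav (f + g) n = Aav f n + Aav g n := by
  simp [Aav, Finset.sum_add_distrib, mul_add]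

lemma Aav_smul (c : ℝ) (f : linf) (n : ℕ) : Aav (c • f) n = c * Aav f n := by
  simp [Aav, ← Finset.mul_sum]; ring

lemma Aav_const (c : ℝ) (n : ℕ) (hn : n ≠ 0) :
    Aav (BoundedContinuousFunction.const ℕ c) n = c := by
  have : (n : ℝ) ≠ 0 := by exact_mod_cast hn
  simp [Aav, this]

def prodFn (f g : linf) (n : ℕ) : ℝ :=
  f n * Aav g n + Aav f (n - 1) * (g n - Aav g n)

lemma prodFn_bound (f g : linf) (n : ℕ) : ‖prodFn f g n‖ ≤ 3 * ‖f‖ * ‖g‖ := by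
  have h1 : |f n| ≤ ‖f‖ := f.norm_coe_le_norm n
  have h2 : |g n| ≤ ‖g‖ := g.norm_coe_le_norm n
  have h3 := Aav_bound g n
  have h4 := Aav_bound f (n - 1)
  have h5 : |g n - Aav g n| ≤ 2 * ‖g‖ := (abs_sub _ _).trans (by linarith)
  rw [Real.norm_eq_abs]
  unfold prodFn
  refine (abs_add_le _ _).trans ?_
  rw [abs_mul, abs_mul]
  have := mul_le_mul h1 h3 (abs_nonneg _) (norm_nonneg _)
  have := mul_le_mul h4 h5 (abs_nonneg _) (norm_nonneg _)
  linarith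

def prodL (f g : linf) : linf :=
  BoundedContinuousFunction.ofNormedAddCommGroupDiscrete (prodFn f g) _ (prodFn_bound f g)

lemma Aav_prod (f g : linf) (n : ℕ) : Aav (prodL f g) n = Aav f n * Aav g n := by
  induction n with
  | zero => simp [Aav]
  | succ n ih =>
    have hn : (n : ℝ) + 1 ≠ 0 := by positivity
    apply mul_left_cancel₀ hn
    rw [Aav_succ, ih]
    have hf := Aav_succ f n
    have hg := Aav_succ g n
    have : prodL f g (n + 1) = f (n + 1) * Aav g (n + 1) + Aav f n * (g (n + 1) - Aav g (n + 1)) :=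
      rfl
    rw [this]
    linear_combination (-Aav g (n + 1)) * hf + (-Aav f n) * hg

lemma exists_lim (U : Ultrafilter ℕ) (f : linf) : ∃ x, Tendsto (Aav f) U (𝓝 x) := by
  have hK : IsCompact (Set.Icc (-‖f‖) ‖f‖) := isCompact_Icc
  obtain ⟨x, -, hx⟩ := hK.ultrafilter_le_nhds (U.map (Aav f)) (by
    rw [le_principal_iff]
    exact Filter.mem_map.2 (Filter.univ_mem' fun n => abs_le.1 (Aav_bound f n)))
  exact ⟨x, hx⟩

lemma tendsto_lim (U : Ultrafilter ℕ) (f : linf) :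
    Tendsto (Aav f) U (𝓝 (limUnder (U : Filter ℕ) (Aav f))) :=
  tendsto_nhds_limUnder (exists_lim U f)

def PhiL (U : Ultrafilter ℕ) : linf →ₗ[ℝ] ℝ where
  toFun f := limUnder (U : Filter ℕ) (Aav f)
  map_add' f g := by
    refine Tendsto.limUnder_eq ?_
    have := (tendsto_lim U f).add (tendsto_lim U g)
    exact this.congr fun n => (Aav_add f g n).symm
  map_smul' c f := by
    refine Tendsto.limUnder_eq ?_
    have := (tendsto_lim U f).const_mul c
    exact this.congr fun n => (Aav_smul c f n).symm

lemma PhiL_bound (U : Ultrafilter ℕ) (f : linf) : ‖PhiL U f‖ ≤ 1 * ‖f‖ := by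
  rw [one_mul]
  exact le_of_tendsto (tendsto_lim U f).norm (Eventually.of_forall (Aav_bound f))

def Phi (U : Ultrafilter ℕ) : WeakDual ℝ linf :=
  StrongDual.toWeakDual ((PhiL U).mkContinuous 1 (PhiL_bound U))

lemma Phi_apply (U : Ultrafilter ℕ) (f : linf) : Phi U f = limUnder (U : Filter ℕ) (Aav f) := rfl

lemma Phi_tendsto (U : Ultrafilter ℕ) (f : linf) : Tendsto (Aav f) U (𝓝 (Phi U f)) :=
  tendsto_lim U f

lemma Phi_cont : Continuous Phi := by
  apply WeakDual.continuous_of_continuous_eval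
  intro f
  rw [continuous_iff_continuousAt]
  intro U
  rw [ContinuousAt, Metric.tendsto_nhds]
  intro ε hε
  have h := Phi_tendsto U f (Metric.closedBall_mem_nhds _ (half_pos hε))
  have h2 : {V : Ultrafilter ℕ | Aav f ⁻¹' Metric.closedBall (Phi U f) (ε / 2) ∈ V} ∈ 𝓝 U :=
    (ultrafilter_isOpen_basic _).mem_nhds h
  filter_upwards [h2] with V hV
  have := Metric.isClosed_closedBall.mem_of_tendsto (Phi_tendsto V f) hV
  rw [Metric.mem_closedBall] at this
  linarith

lemma Ctilde_eq : Ctilde = Phi '' {U | (U : Filter ℕ) ≤ Filter.cofinite} := by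
  ext χ
  constructor
  · rintro ⟨U, hU, h⟩
    exact ⟨U, hU, DFunLike.ext _ _ fun f => (h f).symm⟩
  · rintro ⟨U, hU, rfl⟩
    exact ⟨U, hU, fun f => rfl⟩

lemma Ctilde_compact : IsCompact Ctilde := by
  rw [Ctilde_eq]
  refine IsCompact.image (IsClosed.isCompact ?_) Phi_cont
  have : {U : Ultrafilter ℕ | (U : Filter ℕ) ≤ Filter.cofinite} =
      ⋂ s ∈ (Filter.cofinite : Filter ℕ), {U : Ultrafilter ℕ | s ∈ U} := by
    ext U
    simp only [Set.mem_iInter]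
    rfl
  rw [this]
  exact isClosed_biInter fun s _ => ultrafilter_isClosed_basic s

instance : CompactSpace Ctilde := isCompact_iff_compactSpace.1 Ctilde_compact

instance : Nonempty Ctilde :=
  ⟨⟨Phi (hyperfilter ℕ), hyperfilter ℕ, hyperfilter_le_cofinite, fun _ => rfl⟩⟩

/-- for χ in Ctilde, an ultrafilter along which averages converge -/
lemma Ct_tendsto (χ : Ctilde) : ∃ U : Ultrafilter ℕ, (U : Filter ℕ) ≤ atTop ∧
    ∀ f : linf, Tendsto (Aav f) U (𝓝 ((χ : WeakDual ℝ linf) f)) := by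
  obtain ⟨χ, U, hU, h⟩ := χ
  refine ⟨U, by rwa [← Nat.cofinite_eq_atTop], fun f => ?_⟩
  have := tendsto_lim U f
  rw [show χ f = _ from h f]
  exact this

lemma Cbar_le (f : linf) (c : ℝ) (h : ∀ χ : Ctilde, (χ : WeakDual ℝ linf) f ≤ c) :
    Cbar f ≤ c := by
  by_contra! hc
  obtain ⟨d, hcd, hd⟩ := exists_between hc
  have hfr : ∃ᶠ n in atTop, d < Aav f n := by
    refine frequently_lt_of_lt_limsup ?_ hd
    exact IsBoundedUnder.isCoboundedUnder_le
      ⟨-‖f‖, eventually_map.2 (Eventually.of_forall fun n => (abs_le.1 (Aav_bound f n)).1)⟩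
  have : NeBot (atTop ⊓ 𝓟 {n | d < Aav f n}) := frequently_mem_iff_neBot.1 hfr
  let U := Ultrafilter.of (atTop ⊓ 𝓟 {n | d < Aav f n})
  have hU : (U : Filter ℕ) ≤ atTop ⊓ 𝓟 {n | d < Aav f n} := Ultrafilter.of_le _
  have h1 := h ⟨Phi U, U, by rw [Nat.cofinite_eq_atTop]; exact hU.trans inf_le_left, fun _ => rfl⟩
  have h2 : d ≤ Phi U f := by
    refine ge_of_tendsto (Phi_tendsto U f) ?_
    have : {n | d < Aav f n} ∈ (U : Filter ℕ) := (hU.trans inf_le_right) (mem_principal_self _)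
    filter_upwards [this] with n hn using le_of_lt hn
  exact absurd (h2.trans h1) (not_le.2 hcd)

def Tm : linf →ₗ[ℝ] C(Ctilde, ℝ) where
  toFun f := ⟨fun χ => (χ : WeakDual ℝ linf) f,
    (WeakDual.eval_continuous f).comp continuous_subtype_val⟩
  map_add' f g := by ext χ; exact map_add (χ : WeakDual ℝ linf) f g
  map_smul' c f := by ext χ; exact map_smul (χ : WeakDual ℝ linf) c f

lemma Tm_apply (f : linf) (χ : Ctilde) : Tm f χ = (χ : WeakDual ℝ linf) f := rfl

lemma Tm_const (c : ℝ) : Tm (BoundedContinuousFunction.const ℕ c) = ContinuousMap.const _ c := by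
  ext χ
  obtain ⟨U, hU, h⟩ := Ct_tendsto χ
  refine tendsto_nhds_unique (h _) ?_
  refine tendsto_const_nhds.congr' ?_
  filter_upwards [hU (eventually_ne_atTop 0)] with n hn
  exact (Aav_const c n hn).symm

lemma Tm_mul (f g : linf) : Tm (prodL f g) = Tm f * Tm g := by
  ext χ
  obtain ⟨U, hU, h⟩ := Ct_tendsto χ
  refine tendsto_nhds_unique (h _) ?_
  exact ((h f).mul (h g)).congr fun n => (Aav_prod f g n).symm

def TA : Subalgebra ℝ C(Ctilde, ℝ) where
  carrier := Set.range Tm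
  mul_mem' := by
    rintro _ _ ⟨f, rfl⟩ ⟨g, rfl⟩
    exact ⟨_, Tm_mul f g⟩
  add_mem' := by
    rintro _ _ ⟨f, rfl⟩ ⟨g, rfl⟩
    exact ⟨f + g, map_add _ _ _⟩
  algebraMap_mem' := fun r => ⟨_, Tm_const r⟩

lemma TA_dense (g : C(Ctilde, ℝ)) : g ∈ closure (Set.range Tm) := by
  have h : TA.topologicalClosure = ⊤ := by
    apply ContinuousMap.subalgebra_topologicalClosure_eq_top_of_separatesPoints
    intro χ ψ hne
    have : ∃ f, (χ : WeakDual ℝ linf) f ≠ (ψ : WeakDual ℝ linf) f := by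
      by_contra! hc
      exact hne (Subtype.ext (DFunLike.ext _ _ hc))
    obtain ⟨f, hf⟩ := this
    exact ⟨Tm f, ⟨Tm f, ⟨f, rfl⟩, rfl⟩, hf⟩
  have h2 : g ∈ TA.topologicalClosure := by rw [h]; trivial
  exact h2

lemma int_cont (μ : Measure Ctilde) [IsProbabilityMeasure μ] :
    Continuous fun g : C(Ctilde, ℝ) => ∫ x, g x ∂μ := by
  have hi : ∀ g : C(Ctilde, ℝ), Integrable g μ := fun g =>
    (BoundedContinuousFunction.mkOfCompact g).integrable μ
  refine LipschitzWith.continuous (K := 1) (LipschitzWith.of_dist_le_mul fun g h => ?_)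
  rw [Real.dist_eq, ← integral_sub (hi g) (hi h), ← Real.norm_eq_abs]
  refine (norm_integral_le_of_norm_le_const (C := dist g h)
    (Eventually.of_forall fun x => ?_)).trans (by simp)
  rw [← dist_eq_norm]
  exact ContinuousMap.dist_apply_le_dist x

lemma uniq (μ ν : Measure Ctilde) [IsProbabilityMeasure μ] [IsProbabilityMeasure ν]
    [μ.Regular] [ν.Regular] (h : ∀ f : linf, ∫ x, Tm f x ∂μ = ∫ x, Tm f x ∂ν) : μ = ν := by
  apply Measure.ext_of_integral_eq_on_compactlySupported
  intro f
  have hc : IsClosed {g : C(Ctilde, ℝ) | ∫ x, g x ∂μ = ∫ x, g x ∂ν} :=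
    isClosed_eq (int_cont μ) (int_cont ν)
  have hs : Set.range Tm ⊆ {g : C(Ctilde, ℝ) | ∫ x, g x ∂μ = ∫ x, g x ∂ν} := by
    rintro _ ⟨f, rfl⟩
    exact h f
  exact closure_minimal hs hc (TA_dense f.toContinuousMap)

lemma bdd (g : C(Ctilde, ℝ)) : BddAbove (Set.range g) :=
  (isCompact_range g.continuous).bddAbove

lemma exists_ext (φ : WeakDual ℝ linf) (hφ : φ ∈ Ccl) : ∃ ψ : C(Ctilde, ℝ) →ₗ[ℝ] ℝ,
    (∀ f, ψ (Tm f) = φ f) ∧ ∀ g, ψ g ≤ ⨆ x, g x := by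
  have key : ∀ f : linf, φ f ≤ ⨆ x, Tm f x := fun f =>
    (hφ f).trans (Cbar_le f _ fun χ => le_ciSup (bdd (Tm f)) χ)
  have key0 : ∀ f : linf, Tm f = 0 → φ f = 0 := by
    intro f hf
    have h1 := key f
    have h2 := key (-f)
    rw [map_neg, map_neg] at h2
    rw [hf] at h1 h2
    simp at h1 h2
    linarith
  obtain ⟨s, hs⟩ := Tm.rangeRestrict.exists_rightInverse_of_surjective Tm.range_rangeRestrict
  have hs' : ∀ x, Tm (s x) = x := fun x => congrArg Subtype.val (LinearMap.congr_fun hs x)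
  let φl : linf →ₗ[ℝ] ℝ := (WeakDual.toStrongDual φ).toLinearMap
  obtain ⟨ψ, h1, h2⟩ := exists_extension_of_le_sublinear
    (⟨LinearMap.range Tm, φl ∘ₗ s⟩ : C(Ctilde, ℝ) →ₗ.[ℝ] ℝ) (fun g => ⨆ x, g x)
    (fun c hc g => by
      simp only [ContinuousMap.smul_apply, smul_eq_mul]
      exact (Real.mul_iSup_of_nonneg hc.le _).symm)
    (fun g h => ciSup_le fun x => add_le_add (le_ciSup (bdd g) x) (le_ciSup (bdd h) x))
    (fun x => by
      have := key (s x)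
      rw [hs'] at this
      exact this)
  refine ⟨ψ, fun f => ?_, h2⟩
  have h3 : ψ (Tm f) = φ (s ⟨Tm f, f, rfl⟩) := h1 ⟨Tm f, f, rfl⟩
  have h4 := key0 (s ⟨Tm f, f, rfl⟩ - f) (by rw [map_sub, hs']; simp)
  rw [map_sub] at h4
  linarith

lemma exists_meas (φ : WeakDual ℝ linf) (hφ : φ ∈ Ccl) : ∃ μ : Measure Ctilde,
    IsProbabilityMeasure μ ∧ μ.Regular ∧ ∀ f : linf, φ f = ∫ x, Tm f x ∂μ := by
  obtain ⟨ψ, h1, h2⟩ := exists_ext φ hφ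
  let L : CompactlySupportedContinuousMap Ctilde ℝ →ₗ[ℝ] ℝ :=
    { toFun := fun g => ψ g.toContinuousMap
      map_add' := fun g h => ψ.map_add g.toContinuousMap h.toContinuousMap
      map_smul' := fun c g => ψ.map_smul c g.toContinuousMap }
  let Λ := PositiveLinearMap.mk₀ L (fun g hg => by
    have := h2 (-g.toContinuousMap)
    rw [map_neg] at this
    have h3 : (⨆ x, (-g.toContinuousMap) x) ≤ 0 := ciSup_le fun x => by
      have : 0 ≤ g x := hg x
      simpa using this
    change 0 ≤ ψ g.toContinuousMap
    linarith)
  have hint : ∀ g : C(Ctilde, ℝ), ∫ x, g x ∂(RealRMK.rieszMeasure Λ) = ψ g := fun g =>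
    RealRMK.integral_rieszMeasure Λ (CompactlySupportedContinuousMap.continuousMapEquiv g)
  refine ⟨RealRMK.rieszMeasure Λ, ⟨?_⟩, inferInstance, fun f => ?_⟩
  · have e := hint (ContinuousMap.const _ 1)
    have a := h2 (ContinuousMap.const _ 1)
    have b := h2 (-ContinuousMap.const _ 1)
    rw [map_neg] at b
    simp at a b e
    have : (RealRMK.rieszMeasure Λ).real Set.univ = 1 := by linarith
    rw [Measure.real, ENNReal.toReal_eq_one_iff] at this
    exact this
  · rw [hint, h1]

/-- Every `φ ∈ 𝒞` is represented by a unique regular Borel probability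
measure `μ` on the compact space `𝒞̃`: `φ(f) = ∫_{𝒞̃} χ(f) dμ(χ)` for all `f ∈ ℓ∞`. -/
theorem stmt14 (φ : WeakDual ℝ linf) (hφ : φ ∈ Ccl) :
    ∃! μ : Measure Ctilde, IsProbabilityMeasure μ ∧ μ.Regular ∧
      ∀ f : linf, φ f = ∫ χ : Ctilde, (χ : WeakDual ℝ linf) f ∂μ := by
  obtain ⟨μ, hp, hr, h⟩ := exists_meas φ hφ
  refine ⟨μ, ⟨hp, hr, h⟩, ?_⟩
  rintro ν ⟨hp', hr', h'⟩
  exact uniq ν μ fun f => (h' f).symm.trans (h f)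
end
end

section
/- There exists a free ultrafilter η on ℕ such that (i) some X ∈ η satisfies X+m ∉ η for every integer m ≥ 1, and (ii) no thin set belongs to η. (Equivalently, in the dynamical system (ℕ*, τ) on the Stone–Čech remainder, the set of wandering points is a proper subset of the set of points that do not return to any neighborhood of themselves under negative iteration: 𝒲_d ⊊ 𝒟_d.) -/
open Filter

/-- `A ⊆ ℕ` is thin if `A ∩ (A + m)` is finite for every `m ≥ 1`. -/
def ThinSet (A : Set ℕ) : Prop :=
  ∀ m : ℕ, 1 ≤ m → (A ∩ ((fun x => x + m) '' A)).Finite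

namespace Stmt19

/-- The part of the set made of blocks with spacing larger than `M`. -/
def B (M : ℕ) : Set ℕ :=
  {x | ∃ n i : ℕ, M ≤ (Nat.unpair n).1 ∧ i ≤ (Nat.unpair n).1 ∧
    x = (n + 1) ^ 3 + i * ((Nat.unpair n).1 + 1)}

lemma B_anti {M N : ℕ} (h : M ≤ N) : B N ⊆ B M := by
  rintro x ⟨n, i, h1, h2, h3⟩
  exact ⟨n, i, h.trans h1, h2, h3⟩

lemma block_lt {n p i : ℕ} (h : n < p) (hi : i ≤ (Nat.unpair n).1) :
    (n + 1) ^ 3 + i * ((Nat.unpair n).1 + 1) + (p + 1) ≤ (p + 1) ^ 3 := by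
  have hn := Nat.unpair_left_le n
  have h1 : i * ((Nat.unpair n).1 + 1) ≤ n * (n + 1) := Nat.mul_le_mul (hi.trans hn) (by omega)
  obtain ⟨d, rfl⟩ := Nat.exists_eq_add_of_lt h
  nlinarith [Nat.zero_le (n * d), Nat.zero_le (n * n * d), Nat.zero_le (n * d * d),
    Nat.zero_le (d * d), Nat.zero_le (d * d * d), Nat.zero_le (n * n)]

lemma gap {n i p j m : ℕ} (hm : 1 ≤ m) (hi : i ≤ (Nat.unpair n).1) (hj : j ≤ (Nat.unpair p).1)
    (h : (p + 1) ^ 3 + j * ((Nat.unpair p).1 + 1) + m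
      = (n + 1) ^ 3 + i * ((Nat.unpair n).1 + 1)) : (Nat.unpair n).1 < m := by
  have hn := Nat.unpair_left_le n
  rcases lt_trichotomy n p with hlt | rfl | hlt
  · have := block_lt hlt hi
    omega
  · have hji : j < i := by
      by_contra hc
      have := Nat.mul_le_mul_right ((Nat.unpair n).1 + 1) (not_lt.1 hc)
      omega
    have := Nat.mul_le_mul_right ((Nat.unpair n).1 + 1) (Nat.succ_le_of_lt hji)
    rw [Nat.succ_mul] at this
    omega
  · have := block_lt hlt hj
    omega

lemma B_disj {m : ℕ} (hm : 1 ≤ m) : B m ⊆ ((fun x => x + m) '' B 0)ᶜ := by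
  rintro x ⟨n, i, h1, h2, rfl⟩ ⟨y, ⟨p, j, -, h4, rfl⟩, h⟩
  have := gap hm h2 h4 h
  omega

lemma not_cover (M : ℕ) (T : Set (Set ℕ)) (hT : T.Finite) (hthin : ∀ A ∈ T, ThinSet A) :
    ¬ B M ⊆ ⋃₀ T := by
  intro hc
  classical
  set K := max M hT.toFinset.card with hK
  have hfin : (⋃ A ∈ T, ⋃ m ∈ Set.Icc 1 ((K + 1) * (K + 1)),
      A ∩ ((fun x => x + m) '' A)).Finite :=
    hT.biUnion fun A hA => (Set.finite_Icc _ _).biUnion fun m hm => hthin A hA m hm.1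
  obtain ⟨N, hN⟩ := hfin.bddAbove
  set n := Nat.pair K N with hn
  have hu : (Nat.unpair n).1 = K := by simp [hn]
  have hNn : N ≤ n := Nat.right_le_pair K N
  have hmem : ∀ i ∈ Finset.range (K + 1), ∃ A ∈ T, (n + 1) ^ 3 + i * (K + 1) ∈ A := by
    intro i hi
    have hi' : i ≤ K := by simpa [Nat.lt_succ_iff] using hi
    have : (n + 1) ^ 3 + i * (K + 1) ∈ B M :=
      ⟨n, i, by rw [hu]; exact le_max_left _ _, by rw [hu]; exact hi', by rw [hu]⟩
    exact hc this
  choose! c hcT hcm using hmem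
  have key : ∀ i j, i ∈ Finset.range (K + 1) → j ∈ Finset.range (K + 1) → i < j →
      c i = c j → False := by
    intro i j hi hj hij he
    have h1 := hcm i hi
    have h2 := hcm j hj
    rw [← he] at h2
    obtain ⟨d, rfl⟩ := Nat.exists_eq_add_of_lt hij
    rw [Finset.mem_range] at hj
    have hle : (d + 1) * (K + 1) ≤ (K + 1) * (K + 1) := Nat.mul_le_mul_right _ (by omega)
    have hge : 1 ≤ (d + 1) * (K + 1) := Nat.mul_pos (by omega) (by omega)
    have hb := hN (a := (n + 1) ^ 3 + (i + d + 1) * (K + 1)) (by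
      simp only [Set.mem_iUnion]
      refine ⟨c i, hcT i hi, (d + 1) * (K + 1), ⟨hge, hle⟩, h2, _, h1, ?_⟩
      ring)
    have : n + 1 ≤ (n + 1) ^ 3 := Nat.le_self_pow (by norm_num) _
    omega
  obtain ⟨i, hi, j, hj, hne, he⟩ := Finset.exists_ne_map_eq_of_card_lt_of_maps_to
    (s := Finset.range (K + 1)) (t := hT.toFinset) (f := c)
    (by rw [Finset.card_range]; exact Nat.lt_succ_of_le (le_max_right _ _))
    (fun i hi => by simpa using hcT i hi)
  rcases lt_or_gt_of_ne hne with h | h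
  · exact key i j hi hj h he
  · exact key j i hj hi h he.symm

/-- The filter of sets containing some `B M` up to finitely many thin sets. -/
def F : Filter ℕ where
  sets := {U | ∃ M : ℕ, ∃ T : Set (Set ℕ), T.Finite ∧ (∀ A ∈ T, ThinSet A) ∧ B M \ ⋃₀ T ⊆ U}
  univ_sets := ⟨0, ∅, Set.finite_empty, by simp, Set.subset_univ _⟩
  sets_of_superset := by
    rintro U V ⟨M, T, h1, h2, h3⟩ h
    exact ⟨M, T, h1, h2, h3.trans h⟩
  inter_sets := by
    rintro U V ⟨M, T, h1, h2, h3⟩ ⟨M', T', h1', h2', h3'⟩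
    refine ⟨max M M', T ∪ T', h1.union h1', ?_, ?_⟩
    · rintro A (h | h)
      · exact h2 A h
      · exact h2' A h
    · rintro x ⟨hx, hxT⟩
      rw [Set.sUnion_union] at hxT
      exact ⟨h3 ⟨B_anti (le_max_left _ _) hx, fun h => hxT (Or.inl h)⟩,
        h3' ⟨B_anti (le_max_right _ _) hx, fun h => hxT (Or.inr h)⟩⟩

lemma F_neBot : F.NeBot := by
  rw [Filter.neBot_iff, Ne, ← Filter.empty_mem_iff_bot]
  rintro ⟨M, T, h1, h2, h3⟩
  exact not_cover M T h1 h2 (Set.diff_eq_empty.1 (Set.subset_empty_iff.1 h3))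

lemma B_mem (M : ℕ) : B M ∈ F := ⟨M, ∅, Set.finite_empty, by simp, Set.sdiff_subset⟩

lemma thin_compl {A : Set ℕ} (h : ThinSet A) : Aᶜ ∈ F :=
  ⟨0, {A}, Set.finite_singleton A, by simpa using h, fun x hx => by simpa using hx.2⟩

end Stmt19

/-- There is a free ultrafilter `η` on `ℕ` such that (i) some `X ∈ η`
satisfies `X + m ∉ η` for all `m ≥ 1` (the corresponding point of `ℕ*` lies in `𝒟_d`),
and (ii) no thin set belongs to `η` (the point is not wandering); i.e. `𝒲_d ⊊ 𝒟_d`. -/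
theorem stmt19 :
    ∃ η : Ultrafilter ℕ, (η : Filter ℕ) ≤ Filter.cofinite ∧
      (∃ X ∈ η, ∀ m : ℕ, 1 ≤ m → (fun x => x + m) '' X ∉ η) ∧
      (∀ A ∈ η, ¬ ThinSet A) := by
  have := Stmt19.F_neBot
  have hle : (Ultrafilter.of Stmt19.F : Filter ℕ) ≤ Stmt19.F := Ultrafilter.of_le _
  refine ⟨Ultrafilter.of Stmt19.F, ?_, ⟨Stmt19.B 0, hle (Stmt19.B_mem 0), ?_⟩, ?_⟩
  · intro U hU
    have hf : (Uᶜ).Finite := hU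
    have ht : ThinSet Uᶜ := fun m _ => hf.subset Set.inter_subset_left
    have := Stmt19.thin_compl ht
    rw [compl_compl] at this
    exact hle this
  · intro m hm
    rw [← Ultrafilter.compl_mem_iff_notMem]
    exact hle (Filter.mem_of_superset (Stmt19.B_mem m) (Stmt19.B_disj hm))
  · intro A hA ht
    exact (Ultrafilter.compl_mem_iff_notMem.1 (hle (Stmt19.thin_compl ht))) hA
end
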